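/- arXiv:2603.22098 — 2 statements merged into one kernel-verified Lean document; each statement's English description precedes it below -/
import Mathlib

section
/- There exists a deterministic online bin-packing algorithm for L-skeletons such that on every finite input sequence it uses at most 2·OPT bins, where OPT is the minimum number of unit bins into which the input L-skeletons can be partitioned so that each part admits a valid packing of the unit bin. -/
/-- An L-skeleton, given by its two arm lengths. -/
structure LSkel where
  lx : ℝ
  ly : ℝ

/-- The parameter constraints of an L-skeleton: arm lengths in `[0,1]`. -/
def LSkel.IsValid (L : LSkel) : Prop :=
  0 ≤ L.lx ∧ L.lx ≤ 1 ∧ 0 ≤ L.ly ∧ L.ly ≤ 1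

/-- The point set `([0,ℓx]×{0}) ∪ ({0}×[0,ℓy])` of an L-skeleton. -/
def LSkel.toSet (L : LSkel) : Set (ℝ × ℝ) :=
  Set.Icc ((0, 0) : ℝ × ℝ) (L.lx, 0) ∪ Set.Icc ((0, 0) : ℝ × ℝ) (0, L.ly)

/-- The two endpoints `(ℓx, 0)` and `(0, ℓy)` of an L-skeleton. -/
def LSkel.endpoints (L : LSkel) : Set (ℝ × ℝ) := {(L.lx, 0), (0, L.ly)}

/-- Translate a set in the plane by a vector. -/
def planeTranslate (v : ℝ × ℝ) (S : Set (ℝ × ℝ)) : Set (ℝ × ℝ) := (· + v) '' S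

/-- The unit bin `[0,1]²`. -/
def unitBin : Set (ℝ × ℝ) := Set.Icc ((0, 0) : ℝ × ℝ) (1, 1)

/-- The online decision (bin index, translation vector) made by algorithm `A` for the `i`-th
item of `l`: it depends only on the first `i+1` items. -/
def placeOf (A : List LSkel → ℕ × ℝ × ℝ) (l : List LSkel) (i : Fin l.length) : ℕ × ℝ × ℝ :=
  A (l.take (i.1 + 1))

/-- The placements produced by `A` on input `l` form valid bin packings of skeletons: every
translate lies in the unit bin, and two translates sharing a bin are disjoint, except that a
translated endpoint of one skeleton may lie on the other. -/
def OnlinePacks (A : List LSkel → ℕ × ℝ × ℝ) (l : List LSkel) : Prop :=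
  (∀ i : Fin l.length, planeTranslate (placeOf A l i).2 (l.get i).toSet ⊆ unitBin) ∧
  ∀ i j : Fin l.length, i ≠ j → (placeOf A l i).1 = (placeOf A l j).1 →
    planeTranslate (placeOf A l i).2 (l.get i).toSet ∩
        planeTranslate (placeOf A l j).2 (l.get j).toSet ⊆
      planeTranslate (placeOf A l i).2 (l.get i).endpoints ∪
        planeTranslate (placeOf A l j).2 (l.get j).endpoints

/-- The number of distinct bins used by `A` on input `l`. -/
def binsUsed (A : List LSkel → ℕ × ℝ × ℝ) (l : List LSkel) : ℕ :=
  ((Finset.univ : Finset (Fin l.length)).image fun i => (placeOf A l i).1).card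

/-- The items of `l` can be packed offline into `m` unit bins (skeleton packing: disjoint
except that translated endpoints may lie on another skeleton). -/
def OffPacks (l : List LSkel) (m : ℕ) : Prop :=
  ∃ (bin : Fin l.length → ℕ) (v : Fin l.length → ℝ × ℝ),
    (∀ i, bin i < m) ∧
    (∀ i, planeTranslate (v i) (l.get i).toSet ⊆ unitBin) ∧
    ∀ i j, i ≠ j → bin i = bin j →
      planeTranslate (v i) (l.get i).toSet ∩ planeTranslate (v j) (l.get j).toSet ⊆
        planeTranslate (v i) (l.get i).endpoints ∪ planeTranslate (v j) (l.get j).endpoints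

/-- The offline optimum: the minimum number of unit bins into which `l` can be packed. -/
noncomputable def OPT (l : List LSkel) : ℕ := sInf {m | OffPacks l m}

/-!
Call an item small if both arms are shorter than `1`, wide if its horizontal arm has length `1` and
its vertical arm is positive, tall if its vertical arm has length `1` and its horizontal arm has
length in `(0, 1)`. The remaining items are full-width or full-height segments.

In a single bin, the vertical arms of wide items project to non-overlapping intervals, and a wide
item crosses every tall item. Hence an optimal packing has `kH` bins with wide items and `kV` other
bins with tall items, where `kH` is at least the total height of the wide items and `kV` at least
the total width of the tall items. Moreover, three vertical segments cannot share a bin with three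
horizontal segments or with two wide items, since one of the vertical segments would be interior.

Online, small items go on the diagonal of bin `0`, at generic positions. The first two horizontal
segments go to the top edges of the bins `0` and `1`, the first two vertical segments to their right
edges, and the later ones to the inside of one bin per direction; these two are the bins `1` and
`2`, named as late as possible, so that bin `2` is opened only when the optimum is at least `2`. By
reflection, assume that the first item that is wide or tall is wide. Wide items are grouped by next
fit, where an item that overflows a stack forms a group of its own, so that a stack and its overflow
together exceed `1`. The first stack shares the bin of the horizontal segments, except that its
first item goes to the corner of bin `0`; the slack gained in this way lets the others avoid the
heights of the segments. The first overflow goes to the corner of the bin of the vertical segments.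
All further groups, and all groups of tall items, get their own bins. There are fewer than `2 * kH`
wide and fewer than `2 * kV` tall groups, which leaves room for the bins `0`, `1` and `2`.
-/

namespace LSkel

/-- Reflection of an item in the diagonal. -/
def swap (L : LSkel) : LSkel := ⟨L.ly, L.lx⟩

/-- Both arms are shorter than the bin. -/
structure IsSmall (L : LSkel) : Prop where
  lx_lt : L.lx < 1
  ly_lt : L.ly < 1

/-- A horizontal segment of full width. -/
structure IsHSeg (L : LSkel) : Prop where
  lx_eq : L.lx = 1
  ly_eq : L.ly = 0

/-- A vertical segment of full height. -/
structure IsVSeg (L : LSkel) : Prop where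
  lx_eq : L.lx = 0
  ly_eq : L.ly = 1

/-- A full-width item with a proper vertical arm. -/
structure IsWide (L : LSkel) : Prop where
  lx_eq : L.lx = 1
  ly_pos : 0 < L.ly

/-- A full-height item with a proper horizontal arm. Items with two full arms count as wide only. -/
structure IsTall (L : LSkel) : Prop where
  ly_eq : L.ly = 1
  lx_pos : 0 < L.lx
  lx_ne : L.lx ≠ 1

noncomputable instance : DecidablePred IsHSeg := Classical.decPred _
noncomputable instance : DecidablePred IsVSeg := Classical.decPred _
noncomputable instance : DecidablePred IsWide := Classical.decPred _
noncomputable instance : DecidablePred IsTall := Classical.decPred _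

variable {L : LSkel}

lemma IsValid.swap (h : L.IsValid) : L.swap.IsValid := ⟨h.2.2.1, h.2.2.2, h.1, h.2.1⟩

lemma IsValid.classify (h : L.IsValid) :
    L.IsSmall ∨ L.IsHSeg ∨ L.IsVSeg ∨ L.IsWide ∨ L.IsTall := by
  obtain ⟨hx0, hx1, hy0, hy1⟩ := h
  rcases hx1.eq_or_lt with hx | hx
  · rcases hy0.eq_or_lt with hy | hy
    · exact .inr (.inl ⟨hx, hy.symm⟩)
    · exact .inr (.inr (.inr (.inl ⟨hx, hy⟩)))
  · rcases hy1.eq_or_lt with hy | hy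
    · rcases hx0.eq_or_lt with hx' | hx'
      · exact .inr (.inr (.inl ⟨hx'.symm, hy⟩))
      · exact .inr (.inr (.inr (.inr ⟨hy, hx', hx.ne⟩)))
    · exact .inl ⟨hx, hy⟩

lemma IsSmall.not_isWide (h : L.IsSmall) : ¬L.IsWide := fun w => h.lx_lt.ne w.lx_eq

lemma IsSmall.not_isTall (h : L.IsSmall) : ¬L.IsTall := fun t => h.ly_lt.ne t.ly_eq

lemma IsHSeg.not_isWide (h : L.IsHSeg) : ¬L.IsWide := fun w => w.ly_pos.ne' h.ly_eq

lemma IsHSeg.not_isTall (h : L.IsHSeg) : ¬L.IsTall := fun t => t.lx_ne h.lx_eq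

lemma IsVSeg.not_isWide (h : L.IsVSeg) : ¬L.IsWide := fun w => by linarith [h.lx_eq, w.lx_eq]

lemma IsVSeg.not_isTall (h : L.IsVSeg) : ¬L.IsTall := fun t => t.lx_pos.ne' h.lx_eq

lemma IsWide.not_isTall (h : L.IsWide) : ¬L.IsTall := fun t => t.lx_ne h.lx_eq

lemma IsHSeg.swap (h : L.IsHSeg) : L.swap.IsVSeg := ⟨h.ly_eq, h.lx_eq⟩

lemma IsVSeg.swap (h : L.IsVSeg) : L.swap.IsHSeg := ⟨h.ly_eq, h.lx_eq⟩

lemma IsTall.swap (h : L.IsTall) : L.swap.IsWide := ⟨h.ly_eq, h.lx_pos⟩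

lemma isHSeg_swap : L.swap.IsHSeg ↔ L.IsVSeg := ⟨IsHSeg.swap, IsVSeg.swap⟩

lemma isVSeg_swap : L.swap.IsVSeg ↔ L.IsHSeg := ⟨IsVSeg.swap, IsHSeg.swap⟩

lemma IsWide.isWide_or_isTall_of_swap (h : L.swap.IsWide) : L.IsWide ∨ L.IsTall := by
  have hy : L.ly = 1 := h.lx_eq
  by_cases hx : L.lx = 1
  · exact .inl ⟨hx, hy ▸ one_pos⟩
  · exact .inr ⟨hy, h.ly_pos, hx⟩

end LSkel

/-- An item together with the position `(x, y)` of its corner and the bin it is assigned to. -/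
structure Placed extends LSkel where
  x : ℝ
  y : ℝ
  bin : ℕ

/-- The item `L` placed according to an online decision `d`. -/
def LSkel.place (L : LSkel) (d : ℕ × ℝ × ℝ) : Placed := ⟨L, d.2.1, d.2.2, d.1⟩

namespace Placed

/-- Reflection of a placed item in the diagonal of its bin. -/
def swap (p : Placed) : Placed := ⟨p.toLSkel.swap, p.y, p.x, p.bin⟩

/-- The translated skeleton. -/
def region (p : Placed) : Set (ℝ × ℝ) := planeTranslate (p.x, p.y) p.toSet

/-- The endpoints of the translated skeleton. -/
def tips (p : Placed) : Set (ℝ × ℝ) := planeTranslate (p.x, p.y) p.endpoints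

/-- Two placed items may share a bin. -/
def Compatible (p q : Placed) : Prop := p.region ∩ q.region ⊆ p.tips ∪ q.tips

/-- The arms have nonnegative length and the translated skeleton stays inside the unit bin. -/
structure Fits (p : Placed) : Prop where
  lx_nonneg : 0 ≤ p.lx
  ly_nonneg : 0 ≤ p.ly
  x_nonneg : 0 ≤ p.x
  y_nonneg : 0 ≤ p.y
  right_le : p.x + p.lx ≤ 1
  top_le : p.y + p.ly ≤ 1

variable {p q : Placed}

lemma mem_region {u v : ℝ} : (u, v) ∈ p.region ↔
    (v = p.y ∧ p.x ≤ u ∧ u ≤ p.x + p.lx) ∨ (u = p.x ∧ p.y ≤ v ∧ v ≤ p.y + p.ly) := by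
  simp only [region, planeTranslate, LSkel.toSet, Set.mem_image, Set.mem_union, Set.mem_Icc,
    Prod.exists, Prod.mk_le_mk, Prod.mk_add_mk, Prod.mk.injEq]
  constructor
  · rintro ⟨s, t, ⟨⟨hs, ht⟩, hs', ht'⟩ | ⟨⟨hs, ht⟩, hs', ht'⟩, rfl, rfl⟩
    · exact .inl ⟨by linarith, by linarith, by linarith⟩
    · exact .inr ⟨by linarith, by linarith, by linarith⟩
  · rintro (⟨rfl, hl, hr⟩ | ⟨rfl, hl, hr⟩)
    · exact ⟨u - p.x, 0, .inl ⟨⟨by linarith, le_rfl⟩, by linarith, le_rfl⟩, by ring, by ring⟩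
    · exact ⟨0, v - p.y, .inr ⟨⟨le_rfl, by linarith⟩, le_rfl, by linarith⟩, by ring, by ring⟩

lemma mem_tips {u v : ℝ} :
    (u, v) ∈ p.tips ↔ (u = p.x + p.lx ∧ v = p.y) ∨ (u = p.x ∧ v = p.y + p.ly) := by
  simp only [tips, planeTranslate, LSkel.endpoints, Set.image_insert_eq, Set.image_singleton,
    Set.mem_insert_iff, Set.mem_singleton_iff, Prod.mk_add_mk, Prod.mk.injEq, zero_add,
    add_comm p.lx, add_comm p.ly]

lemma compatible_iff : p.Compatible q ↔
    ∀ u v, (u, v) ∈ p.region → (u, v) ∈ q.region → (u, v) ∈ p.tips ∨ (u, v) ∈ q.tips :=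
  ⟨fun h _ _ hp hq => h ⟨hp, hq⟩, fun h _ hpq => h _ _ hpq.1 hpq.2⟩

lemma Compatible.symm (h : p.Compatible q) : q.Compatible p := by
  rwa [Compatible, Set.inter_comm, Set.union_comm]

lemma Compatible.swap (h : p.Compatible q) : p.swap.Compatible q.swap := by
  have region_swap (r : Placed) (u v : ℝ) : (u, v) ∈ r.swap.region ↔ (v, u) ∈ r.region := by
    rw [mem_region, mem_region, or_comm]; rfl
  have tips_swap (r : Placed) (u v : ℝ) : (u, v) ∈ r.swap.tips ↔ (v, u) ∈ r.tips := by
    rw [mem_tips, mem_tips, or_comm, and_comm, and_comm (a := u = _)]; rfl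
  simp only [compatible_iff, region_swap, tips_swap] at h ⊢
  exact fun u v => h v u

lemma Fits.swap (h : p.Fits) : p.swap.Fits :=
  ⟨h.ly_nonneg, h.lx_nonneg, h.y_nonneg, h.x_nonneg, h.top_le, h.right_le⟩

lemma region_subset_unitBin_iff (hp : p.IsValid) : p.region ⊆ unitBin ↔ p.Fits := by
  have mem_unitBin {u v : ℝ} : (u, v) ∈ unitBin ↔ (0 ≤ u ∧ 0 ≤ v) ∧ u ≤ 1 ∧ v ≤ 1 := by
    simp [unitBin]
  obtain ⟨hx, -, hy, -⟩ := hp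
  constructor
  · intro h
    have top := mem_unitBin.1 (h (mem_region.2 (.inr ⟨rfl, le_add_of_nonneg_right hy, le_rfl⟩)))
    have right := mem_unitBin.1 (h (mem_region.2 (.inl ⟨rfl, le_add_of_nonneg_right hx, le_rfl⟩)))
    exact ⟨hx, hy, top.1.1, right.1.2, right.2.1, top.2.2⟩
  · rintro ⟨-, -, hx0, hy0, hx1, hy1⟩ ⟨u, v⟩ h
    rw [mem_unitBin]
    rcases mem_region.1 h with ⟨rfl, hl, hr⟩ | ⟨rfl, hl, hr⟩ <;>
      refine ⟨⟨?_, ?_⟩, ?_, ?_⟩ <;> linarith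

/-! ### Sufficient conditions for compatibility -/

lemma compatible_of_nested (hx : p.x < q.x) (hy : p.y < q.y) : p.Compatible q := by
  rw [compatible_iff]
  intro u v hp hq
  rcases mem_region.1 hp with hp | hp <;> rcases mem_region.1 hq with hq | hq <;>
    linarith [hp.1, hp.2.1, hq.1, hq.2.1]

lemma compatible_of_left_aligned (hp : 0 ≤ p.ly) (hq : 0 ≤ q.ly) (hx : p.x = q.x) (hy : p.y ≠ q.y)
    (h : p.y + p.ly ≤ q.y ∨ p.ly = 0 ∨ q.ly = 0) : p.Compatible q := by
  rw [compatible_iff]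
  intro u v hup huq
  rw [mem_tips, mem_tips]
  rcases mem_region.1 hup with ⟨ep, _, _⟩ | ⟨ep, _, _⟩ <;>
    rcases mem_region.1 huq with ⟨eq, _, _⟩ | ⟨eq, _, _⟩
  · exact absurd (ep.symm.trans eq) hy
  · rcases h with h | h | h
    · exact absurd (by linarith) hy
    · exact .inl (.inr ⟨by linarith, by linarith⟩)
    · exact absurd (by linarith) hy
  · rcases h with h | h | h
    · exact .inl (.inr ⟨ep, by linarith⟩)
    · exact absurd (by linarith) hy
    · exact .inr (.inr ⟨by linarith, by linarith⟩)
  · rcases h with h | h | h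
    · exact .inl (.inr ⟨ep, by linarith⟩)
    · exact .inl (.inr ⟨ep, by linarith⟩)
    · exact .inr (.inr ⟨eq, by linarith⟩)

lemma compatible_of_bottom_aligned (hp : 0 ≤ p.lx) (hq : 0 ≤ q.lx) (hy : p.y = q.y)
    (hx : p.x ≠ q.x) (h : p.x + p.lx ≤ q.x ∨ p.lx = 0 ∨ q.lx = 0) : p.Compatible q :=
  (compatible_of_left_aligned (p := p.swap) (q := q.swap) hp hq hy hx h).swap

lemma compatible_of_right_edge (hq : q.lx = 0) (hqx : q.x = 1) (hp : p.x < 1)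
    (hp' : p.x + p.lx ≤ 1) : p.Compatible q := by
  rw [compatible_iff]
  intro u v hup huq
  have hu : u = 1 := by rcases mem_region.1 huq with h | h <;> linarith [h.1, h.2.1, h.2.2]
  rcases mem_region.1 hup with ⟨ev, -, hr⟩ | ⟨eu, -, -⟩
  · exact .inl (mem_tips.2 (.inl ⟨by linarith, ev⟩))
  · linarith

lemma compatible_of_top_edge (hq : q.ly = 0) (hqy : q.y = 1) (hp : p.y < 1)
    (hp' : p.y + p.ly ≤ 1) : p.Compatible q :=
  (compatible_of_right_edge (p := p.swap) (q := q.swap) hq hqy hp hp').swap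

/-! ### Obstructions to compatibility -/

lemma Compatible.y_ne_of_full_width (h : p.Compatible q) (hp : p.Fits) (hq : q.Fits)
    (hpx : p.lx = 1) (hqx : q.lx = 1) : p.y ≠ q.y := by
  intro hy
  obtain ⟨-, -, hp0, -, hp1, -⟩ := hp
  obtain ⟨-, -, hq0, -, hq1, -⟩ := hq
  have common := compatible_iff.1 h (1 / 2) p.y
    (mem_region.2 (.inl ⟨rfl, by linarith, by linarith⟩))
    (mem_region.2 (.inl ⟨hy, by linarith, by linarith⟩))
  rw [mem_tips, mem_tips] at common
  rcases common with (h | h) | (h | h) <;> linarith [h.1]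

lemma Compatible.x_ne_of_full_height (h : p.Compatible q) (hp : p.Fits) (hq : q.Fits)
    (hpy : p.ly = 1) (hqy : q.ly = 1) : p.x ≠ q.x :=
  h.swap.y_ne_of_full_width hp.swap hq.swap hpy hqy

lemma Compatible.top_le_of_isWide (h : p.Compatible q) (hp : p.Fits) (hq : q.Fits)
    (hpw : p.IsWide) (hqw : q.IsWide) (hy : p.y ≤ q.y) : p.y + p.ly ≤ q.y := by
  have hlt := lt_of_le_of_ne hy (h.y_ne_of_full_width hp hq hpw.lx_eq hqw.lx_eq)
  by_contra! overlap
  obtain ⟨-, -, hp0, -, hp1, -⟩ := hp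
  obtain ⟨-, -, hq0, -, hq1, -⟩ := hq
  have hpx := hpw.lx_eq
  have hqx := hqw.lx_eq
  have crossing := compatible_iff.1 h 0 q.y
    (mem_region.2 (.inr ⟨by linarith, by linarith, by linarith⟩))
    (mem_region.2 (.inl ⟨rfl, by linarith, by linarith⟩))
  rw [mem_tips, mem_tips] at crossing
  rcases crossing with (h | h) | (h | h) <;> linarith [h.1, h.2, hqw.ly_pos]

lemma Compatible.stacked_of_isWide (h : p.Compatible q) (hp : p.Fits) (hq : q.Fits)
    (hpw : p.IsWide) (hqw : q.IsWide) : p.y + p.ly ≤ q.y ∨ q.y + q.ly ≤ p.y :=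
  (le_total p.y q.y).imp (h.top_le_of_isWide hp hq hpw hqw) (h.symm.top_le_of_isWide hq hp hqw hpw)

lemma full_width_full_height_crossing (hp : p.Fits) (hq : q.Fits) (hpx : p.lx = 1)
    (hqy : q.ly = 1) : (q.x, p.y) ∈ p.region ∧ (q.x, p.y) ∈ q.region := by
  obtain ⟨-, hpl, hpx0, hpy0, hpx1, hpy1⟩ := hp
  obtain ⟨hql, -, hqx0, hqy0, hqx1, hqy1⟩ := hq
  exact ⟨mem_region.2 (.inl ⟨rfl, by linarith, by linarith⟩),
    mem_region.2 (.inr ⟨rfl, by linarith, by linarith⟩)⟩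

lemma not_compatible_of_isWide_of_isTall (hp : p.Fits) (hq : q.Fits) (hpw : p.IsWide)
    (hqt : q.IsTall) : ¬p.Compatible q := by
  intro h
  obtain ⟨hcp, hcq⟩ := full_width_full_height_crossing hp hq hpw.lx_eq hqt.ly_eq
  have crossing := compatible_iff.1 h _ _ hcp hcq
  rw [mem_tips, mem_tips] at crossing
  have hpx := hpw.lx_eq
  have hqy := hqt.ly_eq
  rcases crossing with (h | h) | (h | h) <;>
    linarith [h.1, h.2, hpw.ly_pos, hqt.lx_pos, hp.x_nonneg, hp.top_le, hq.y_nonneg, hq.right_le]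

lemma Compatible.y_eq_zero_or_one (h : p.Compatible q) (hp : p.Fits) (hq : q.Fits)
    (hpx : p.lx = 1) (hqy : q.ly = 1) (hqx0 : 0 < q.x) (hqx1 : q.x < 1) : p.y = 0 ∨ p.y = 1 := by
  obtain ⟨hcp, hcq⟩ := full_width_full_height_crossing hp hq hpx hqy
  have crossing := compatible_iff.1 h _ _ hcp hcq
  rw [mem_tips, mem_tips] at crossing
  obtain ⟨-, -, hpx0, -, hpx1, -⟩ := hp
  obtain ⟨-, -, -, hqy0, -, hqy1⟩ := hq
  rcases crossing with (h | h) | (h | h)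
  · linarith [h.1]
  · linarith [h.1]
  · exact .inl (by linarith [h.2])
  · exact .inr (by linarith [h.2])

end Placed

/-! ### Packings as lists of placed items -/

/-- The underlying items of a list of placed items. -/
def items (h : List Placed) : List LSkel := h.map Placed.toLSkel

/-- The placed items form a valid packing in each bin. -/
structure IsPacking (h : List Placed) : Prop where
  fits : ∀ p ∈ h, p.Fits
  compatible : h.Pairwise fun p q => p.bin = q.bin → p.Compatible q

instance : Std.Symm fun p q : Placed => p.bin = q.bin → p.Compatible q :=
  ⟨fun _ _ h hbin => (h hbin.symm).symm⟩

lemma items_append_singleton (h : List Placed) (p : Placed) :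
    items (h ++ [p]) = items h ++ [p.toLSkel] := List.map_append

lemma items_map_swap (h : List Placed) : items (h.map Placed.swap) = (items h).map LSkel.swap := by
  rw [items, items, List.map_map, List.map_map]; rfl

lemma IsPacking.map_swap {h : List Placed} (hh : IsPacking h) : IsPacking (h.map Placed.swap) where
  fits := by
    intro p hp
    obtain ⟨q, hq, rfl⟩ := List.mem_map.1 hp
    exact (hh.fits q hq).swap
  compatible := List.pairwise_map.2 (hh.compatible.imp fun hpq hbin => (hpq hbin).swap)

lemma pairwise_ofFn_of_symm {α : Type*} {R : α → α → Prop} [Std.Symm R] {n : ℕ} {f : Fin n → α} :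
    (List.ofFn f).Pairwise R ↔ ∀ i j, i ≠ j → R (f i) (f j) := by
  rw [List.pairwise_ofFn]
  refine ⟨fun h i j hij => ?_, fun h i j hij => h i j hij.ne⟩
  rcases lt_or_gt_of_ne hij with hij | hij
  exacts [h hij, symm_of R (h hij)]

lemma isPacking_ofFn {n : ℕ} {f : Fin n → Placed} (hf : ∀ i, (f i).IsValid) :
    IsPacking (List.ofFn f) ↔ (∀ i, (f i).region ⊆ unitBin) ∧
      ∀ i j, i ≠ j → (f i).bin = (f j).bin → (f i).Compatible (f j) := by
  have fits_iff : (∀ p ∈ List.ofFn f, p.Fits) ↔ ∀ i, (f i).region ⊆ unitBin := by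
    simp only [List.forall_mem_ofFn_iff, Placed.region_subset_unitBin_iff (hf _)]
  have compatible_iff := pairwise_ofFn_of_symm
    (R := fun p q : Placed => p.bin = q.bin → p.Compatible q) (f := f)
  exact ⟨fun h => ⟨fits_iff.1 h.fits, compatible_iff.1 h.compatible⟩,
    fun h => ⟨fits_iff.2 h.1, compatible_iff.2 h.2⟩⟩

lemma OffPacks.exists_isPacking {l : List LSkel} {m : ℕ} (h : OffPacks l m)
    (hl : ∀ L ∈ l, L.IsValid) : ∃ h, items h = l ∧ IsPacking h ∧ ∀ p ∈ h, p.bin < m := by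
  obtain ⟨bin, v, hbin, hfits, hcompat⟩ := h
  refine ⟨List.ofFn fun i => (l.get i).place (bin i, v i), ?_, ?_, ?_⟩
  · rw [items, List.map_ofFn]
    exact List.ofFn_get l
  · exact (isPacking_ofFn fun i => hl _ (l.get_mem i)).2 ⟨hfits, hcompat⟩
  · exact List.forall_mem_ofFn_iff.2 hbin

lemma offPacks_length {l : List LSkel} (hl : ∀ L ∈ l, L.IsValid) : OffPacks l l.length := by
  refine ⟨fun i => i, fun _ => 0, fun i => i.2, fun i => ?_, fun i j hij h =>
    absurd (Fin.ext h) hij⟩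
  have valid := hl _ (l.get_mem i)
  refine (Placed.region_subset_unitBin_iff (p := (l.get i).place (0, 0, 0)) valid).2 ?_
  exact ⟨valid.1, valid.2.2.1, le_rfl, le_rfl, (zero_add _).trans_le valid.2.1,
    (zero_add _).trans_le valid.2.2.2⟩

lemma offPacks_OPT {l : List LSkel} (hl : ∀ L ∈ l, L.IsValid) : OffPacks l (OPT l) :=
  Nat.sInf_mem (s := {m | OffPacks l m}) ⟨_, offPacks_length hl⟩

/-- The packing produced by the online algorithm `A` on the input `l`. -/
def history (A : List LSkel → ℕ × ℝ × ℝ) (l : List LSkel) : List Placed :=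
  List.ofFn fun i => (l.get i).place (placeOf A l i)

section history

variable (A : List LSkel → ℕ × ℝ × ℝ) (l : List LSkel)

lemma items_history : items (history A l) = l := by
  rw [items, history, List.map_ofFn]
  exact List.ofFn_get l

lemma history_append_singleton (L : LSkel) :
    history A (l ++ [L]) = history A l ++ [L.place (A (l ++ [L]))] := by
  refine List.ext_getElem (by simp [history]) fun i hi _ => ?_
  have hi' : i < l.length + 1 := by simpa [history] using hi
  rcases (Nat.lt_succ_iff.1 hi').lt_or_eq with hlt | rfl
  · have take_eq : (l ++ [L]).take (i + 1) = l.take (i + 1) := List.take_append_of_le_length hlt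
    simp [history, placeOf, hlt, take_eq, -List.ofFn_succ]
  · have take_eq : (l ++ [L]).take (l.length + 1) = l ++ [L] := List.take_of_length_le (by simp)
    simp [history, placeOf, take_eq, -List.ofFn_succ]

lemma binsUsed_eq : binsUsed A l = ((history A l).map Placed.bin).toFinset.card := by
  rw [binsUsed]
  congr 1
  ext b
  simp [history, LSkel.place, eq_comm]

variable {A l}

lemma onlinePacks_of_isPacking (hl : ∀ L ∈ l, L.IsValid) (h : IsPacking (history A l)) :
    OnlinePacks A l :=
  (isPacking_ofFn fun i => hl _ (l.get_mem i)).1 h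

end history

lemma exists_online_algorithm {Good : List Placed → Prop} (nil : Good [])
    (extend : ∀ h, Good h → ∀ L : LSkel, L.IsValid →
      ∃ p : Placed, p.toLSkel = L ∧ Good (h ++ [p])) :
    ∃ A, ∀ l : List LSkel, (∀ L ∈ l, L.IsValid) → Good (history A l) := by
  have : Nonempty Placed := ⟨LSkel.place ⟨0, 0⟩ (0, 0, 0)⟩
  choose! next next_item next_good using extend
  let run : List LSkel → List Placed := List.foldl (fun h L => h ++ [next h L]) []
  let A (l : List LSkel) : ℕ × ℝ × ℝ :=
    ((run l).getLast?.map fun p => (p.bin, p.x, p.y)).getD (0, 0, 0)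
  have run_append (l : List LSkel) (L : LSkel) : run (l ++ [L]) = run l ++ [next (run l) L] :=
    List.foldl_concat ..
  suffices ∀ l : List LSkel, (∀ L ∈ l, L.IsValid) → history A l = run l ∧ Good (run l) from
    ⟨A, fun l hl => by rw [(this l hl).1]; exact (this l hl).2⟩
  intro l
  induction l using List.reverseRecOn with
  | nil => exact fun _ => ⟨rfl, nil⟩
  | append_singleton l L ih =>
    intro hl
    have hL : L.IsValid := hl L (by simp)
    obtain ⟨history_eq, good⟩ := ih fun M hM => hl M (List.mem_append_left _ hM)
    have place_eq : L.place (A (l ++ [L])) = next (run l) L := by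
      simp only [A, run_append, List.getLast?_concat, Option.map_some, Option.getD_some]
      exact congrArg (LSkel.place · (_, _, _)) (next_item _ good L hL).symm
    rw [history_append_singleton, history_eq, place_eq, run_append]
    exact ⟨rfl, next_good _ good L hL⟩

/-! ### Tallies of an item list -/

noncomputable section tallies

variable (l : List LSkel)

/-- The number of full-width segments. -/
def hsegCount : ℕ := l.countP fun L => L.IsHSeg

/-- The number of full-height segments. -/
def vsegCount : ℕ := l.countP fun L => L.IsVSeg

/-- The number of wide items. -/
def wideCount : ℕ := l.countP fun L => L.IsWide

/-- The total height of the wide items. -/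
def wideHeight : ℝ := ((l.filter fun L => L.IsWide).map LSkel.ly).sum

/-- The total width of the tall items. -/
def tallWidth : ℝ := ((l.filter fun L => L.IsTall).map LSkel.lx).sum

end tallies

/-- In a single bin, some full-width item would have to lie strictly between the horizontal
edges. -/
def NeedsHBin (l : List LSkel) : Prop := 3 ≤ hsegCount l ∨ 2 ≤ wideCount l

/-- In a single bin, some full-height item would have to lie strictly between the vertical edges, or
the wide items would be too high. -/
def NeedsVBin (l : List LSkel) : Prop := 3 ≤ vsegCount l ∨ 1 < wideHeight l

section tallies

variable {l : List LSkel} {L : LSkel}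

lemma hsegCount_append_of_isHSeg (h : L.IsHSeg) : hsegCount (l ++ [L]) = hsegCount l + 1 := by
  simp [hsegCount, h]

lemma vsegCount_append_of_isVSeg (h : L.IsVSeg) : vsegCount (l ++ [L]) = vsegCount l + 1 := by
  simp [vsegCount, h]

lemma wideCount_append_of_isWide (h : L.IsWide) : wideCount (l ++ [L]) = wideCount l + 1 := by
  simp [wideCount, h]

lemma wideHeight_append_of_isWide (h : L.IsWide) : wideHeight (l ++ [L]) = wideHeight l + L.ly := by
  simp [wideHeight, h]

lemma wideHeight_append_of_not_isWide (h : ¬L.IsWide) : wideHeight (l ++ [L]) = wideHeight l := by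
  simp [wideHeight, h]

lemma tallWidth_append_of_isTall (h : L.IsTall) : tallWidth (l ++ [L]) = tallWidth l + L.lx := by
  simp [tallWidth, h]

lemma tallWidth_append_of_not_isTall (h : ¬L.IsTall) : tallWidth (l ++ [L]) = tallWidth l := by
  simp [tallWidth, h]

lemma hsegCount_le_append : hsegCount l ≤ hsegCount (l ++ [L]) :=
  (List.sublist_append_left l [L]).countP_le

lemma vsegCount_le_append : vsegCount l ≤ vsegCount (l ++ [L]) :=
  (List.sublist_append_left l [L]).countP_le

lemma wideCount_le_append : wideCount l ≤ wideCount (l ++ [L]) :=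
  (List.sublist_append_left l [L]).countP_le

lemma wideHeight_le_append : wideHeight l ≤ wideHeight (l ++ [L]) := by
  by_cases h : L.IsWide
  · rw [wideHeight_append_of_isWide h]
    exact le_add_of_nonneg_right h.ly_pos.le
  · rw [wideHeight_append_of_not_isWide h]

lemma NeedsHBin.append (h : NeedsHBin l) : NeedsHBin (l ++ [L]) :=
  h.imp hsegCount_le_append.trans' wideCount_le_append.trans'

lemma NeedsVBin.append (h : NeedsVBin l) : NeedsVBin (l ++ [L]) :=
  h.imp vsegCount_le_append.trans' wideHeight_le_append.trans_lt'

lemma wideHeight_le_wideCount (hl : ∀ L ∈ l, L.ly ≤ 1) : wideHeight l ≤ wideCount l := by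
  have bound := List.sum_le_card_nsmul ((l.filter fun L => L.IsWide).map LSkel.ly) 1
    (List.forall_mem_map.2 fun L hL => hl L (List.mem_of_mem_filter hL))
  simpa only [wideHeight, wideCount, List.countP_eq_length_filter, List.length_map, nsmul_one]
    using bound

lemma two_le_wideCount (hl : ∀ L ∈ l, L.ly ≤ 1) (h : 1 < wideHeight l) : 2 ≤ wideCount l := by
  exact_mod_cast h.trans_le (wideHeight_le_wideCount hl)

variable (l)

lemma hsegCount_map_swap : hsegCount (l.map LSkel.swap) = vsegCount l := by
  simp only [hsegCount, vsegCount, List.countP_map, Function.comp_def, LSkel.isHSeg_swap]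

lemma vsegCount_map_swap : vsegCount (l.map LSkel.swap) = hsegCount l := by
  simp only [hsegCount, vsegCount, List.countP_map, Function.comp_def, LSkel.isVSeg_swap]

end tallies

section placed_tallies

variable (h : List Placed)

lemma hsegCount_items : hsegCount (items h) = (h.filter fun p => p.IsHSeg).length := by
  rw [hsegCount, items, List.countP_map, List.countP_eq_length_filter]; rfl

lemma vsegCount_items : vsegCount (items h) = (h.filter fun p => p.IsVSeg).length := by
  rw [vsegCount, items, List.countP_map, List.countP_eq_length_filter]; rfl

lemma wideCount_items : wideCount (items h) = (h.filter fun p => p.IsWide).length := by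
  rw [wideCount, items, List.countP_map, List.countP_eq_length_filter]; rfl

lemma wideHeight_items :
    wideHeight (items h) = ((h.filter fun p => p.IsWide).map fun p => p.ly).sum := by
  rw [wideHeight, items, List.filter_map, List.map_map]; rfl

lemma tallWidth_items :
    tallWidth (items h) = ((h.filter fun p => p.IsTall).map fun p => p.lx).sum := by
  rw [tallWidth, items, List.filter_map, List.map_map]; rfl

end placed_tallies

/-! ### Lower bounds for arbitrary packings -/

open MeasureTheory in
lemma volume_biUnion_Ico {α : Type*} {l : List α} {lo hi : α → ℝ} (le : ∀ a ∈ l, lo a ≤ hi a)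
    (disj : l.Pairwise fun a b => hi a ≤ lo b ∨ hi b ≤ lo a) :
    volume (⋃ a ∈ l, Set.Ico (lo a) (hi a)) = ENNReal.ofReal (l.map fun a => hi a - lo a).sum := by
  induction l with
  | nil => simp
  | cons a l ih =>
    rw [List.pairwise_cons] at disj
    rw [List.forall_mem_cons] at le
    have disj_rest : Disjoint (Set.Ico (lo a) (hi a)) (⋃ b ∈ l, Set.Ico (lo b) (hi b)) := by
      simp only [Set.disjoint_iUnion_right]
      intro b hb
      refine Set.disjoint_left.2 fun t hta htb => ?_
      rcases disj.1 b hb with h | h <;> linarith [hta.1, hta.2, htb.1, htb.2]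
    have meas : MeasurableSet (⋃ b ∈ l, Set.Ico (lo b) (hi b)) :=
      MeasurableSet.biUnion l.finite_toSet.countable fun _ _ => measurableSet_Ico
    have rest_nonneg : 0 ≤ (l.map fun b => hi b - lo b).sum :=
      List.sum_nonneg (List.forall_mem_map.2 fun b hb => sub_nonneg.2 (le.2 b hb))
    simp only [List.mem_cons, Set.iUnion_iUnion_eq_or_left, List.map_cons, List.sum_cons]
    rw [measure_union disj_rest meas, ih le.2 disj.2, Real.volume_Ico,
      ENNReal.ofReal_add (sub_nonneg.2 le.1) rest_nonneg]

open MeasureTheory in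
lemma sum_length_le_card_bins {α : Type*} {l : List α} (bin : α → ℕ) {lo len : α → ℝ}
    (lo_nonneg : ∀ a ∈ l, 0 ≤ lo a) (len_nonneg : ∀ a ∈ l, 0 ≤ len a)
    (le_one : ∀ a ∈ l, lo a + len a ≤ 1)
    (disj : l.Pairwise fun a b => bin a = bin b → lo a + len a ≤ lo b ∨ lo b + len b ≤ lo a) :
    (l.map len).sum ≤ (l.map bin).toFinset.card := by
  -- Shifting the interval of `a` by `bin a` places the bins side by side on the real line.
  let left (a : α) : ℝ := bin a + lo a
  let right (a : α) : ℝ := bin a + lo a + len a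
  have shifted_disj : l.Pairwise fun a b => right a ≤ left b ∨ right b ≤ left a :=
    disj.imp_of_mem fun {a b} ha hb h => by
      rcases lt_trichotomy (bin a) (bin b) with hlt | heq | hlt
      · have hlt' : (bin a : ℝ) + 1 ≤ bin b := by exact_mod_cast hlt
        exact .inl (by linarith [le_one a ha, lo_nonneg b hb])
      · have heq' : (bin a : ℝ) = bin b := by exact_mod_cast heq
        exact (h heq).imp (fun h => by linarith) fun h => by linarith
      · have hlt' : (bin b : ℝ) + 1 ≤ bin a := by exact_mod_cast hlt
        exact .inr (by linarith [le_one b hb, lo_nonneg a ha])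
  have volume_eq := volume_biUnion_Ico (lo := left) (hi := right)
    (fun a ha => le_add_of_nonneg_right (len_nonneg a ha)) shifted_disj
  have cover : (⋃ a ∈ l, Set.Ico (left a) (right a)) ⊆
      ⋃ b ∈ (l.map bin).toFinset, Set.Ico (b : ℝ) (b + 1) := by
    refine Set.iUnion₂_subset fun a ha => ?_
    have hbin : bin a ∈ (l.map bin).toFinset := List.mem_toFinset.2 (List.mem_map_of_mem ha)
    refine Set.subset_biUnion_of_mem (u := fun b : ℕ => Set.Ico (b : ℝ) (b + 1)) hbin |>.trans' ?_
    exact Set.Ico_subset_Ico (by linarith [lo_nonneg a ha]) (by linarith [le_one a ha])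
  have sum_eq : (l.map fun a => right a - left a) = l.map len :=
    List.map_congr_left fun a _ => add_sub_cancel_left _ _
  rw [sum_eq] at volume_eq
  have bound := (measure_mono cover).trans (measure_biUnion_finset_le (μ := volume) _ _)
  simp only [volume_eq, Real.volume_Ico, add_sub_cancel_left, ENNReal.ofReal_one,
    Finset.sum_const, nsmul_one] at bound
  rwa [← ENNReal.ofReal_natCast, ENNReal.ofReal_le_ofReal_iff (Nat.cast_nonneg _)] at bound

/-- The bins containing a wide item. -/
noncomputable def wideBins (h : List Placed) : Finset ℕ :=
  ((h.filter fun p => p.IsWide).map Placed.bin).toFinset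

/-- The bins containing a tall item. -/
noncomputable def tallBins (h : List Placed) : Finset ℕ :=
  ((h.filter fun p => p.IsTall).map Placed.bin).toFinset

lemma exists_notMem_of_nodup_map {α β : Type*} {l : List α} {f : α → β} {ends : List β}
    (nodup : (l.map f).Nodup) (hlen : ends.length < l.length) : ∃ a ∈ l, f a ∉ ends := by
  by_contra! hends
  have := (nodup.subperm (List.forall_mem_map.2 hends)).length_le
  rw [List.length_map] at this
  omega

lemma card_wideBins_le_one {h : List Placed} {b : ℕ} (hb : ∀ p ∈ h, p.bin = b) :
    (wideBins h).card ≤ 1 := by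
  refine Finset.card_le_one_iff_subset_singleton.2 ⟨b, fun a ha => ?_⟩
  simp only [wideBins, List.mem_toFinset, List.mem_map, List.mem_filter] at ha
  obtain ⟨p, ⟨hp, -⟩, rfl⟩ := ha
  exact Finset.mem_singleton.2 (hb p hp)

namespace IsPacking

variable {h : List Placed} (hh : IsPacking h)
include hh

lemma compatible_of_mem {p q : Placed} (hp : p ∈ h) (hq : q ∈ h) (hne : p ≠ q)
    (hbin : p.bin = q.bin) : p.Compatible q :=
  hh.compatible.forall hp hq hne hbin

lemma wideHeight_le_card_wideBins : wideHeight (items h) ≤ (wideBins h).card := by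
  rw [wideHeight_items]
  have mem {p : Placed} (hp : p ∈ h.filter fun p => p.IsWide) : p.Fits ∧ p.IsWide := by
    rw [List.mem_filter, decide_eq_true_eq] at hp
    exact ⟨hh.fits p hp.1, hp.2⟩
  refine sum_length_le_card_bins Placed.bin (lo := Placed.y) (fun p hp => (mem hp).1.y_nonneg)
    (fun p hp => (mem hp).1.ly_nonneg) (fun p hp => (mem hp).1.top_le)
    ((hh.compatible.filter _).imp_of_mem fun hp hq hpq hbin => ?_)
  exact (hpq hbin).stacked_of_isWide (mem hp).1 (mem hq).1 (mem hp).2 (mem hq).2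

lemma tallWidth_le_card_tallBins : tallWidth (items h) ≤ (tallBins h).card := by
  rw [tallWidth_items]
  have mem {p : Placed} (hp : p ∈ h.filter fun p => p.IsTall) : p.Fits ∧ p.IsTall := by
    rw [List.mem_filter, decide_eq_true_eq] at hp
    exact ⟨hh.fits p hp.1, hp.2⟩
  refine sum_length_le_card_bins Placed.bin (lo := Placed.x) (fun p hp => (mem hp).1.x_nonneg)
    (fun p hp => (mem hp).1.lx_nonneg) (fun p hp => (mem hp).1.right_le)
    ((hh.compatible.filter _).imp_of_mem fun hp hq hpq hbin => ?_)
  exact (hpq hbin).swap.stacked_of_isWide (mem hp).1.swap (mem hq).1.swap (mem hp).2.swap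
    (mem hq).2.swap

lemma disjoint_wideBins_tallBins : Disjoint (wideBins h) (tallBins h) := by
  refine Finset.disjoint_left.2 fun b hbw hbt => ?_
  simp only [wideBins, tallBins, List.mem_toFinset, List.mem_map, List.mem_filter,
    decide_eq_true_eq] at hbw hbt
  obtain ⟨p, ⟨hp, hpw⟩, rfl⟩ := hbw
  obtain ⟨q, ⟨hq, hqt⟩, hbin⟩ := hbt
  refine Placed.not_compatible_of_isWide_of_isTall (hh.fits p hp) (hh.fits q hq) hpw hqt
    (hh.compatible_of_mem hp hq ?_ hbin.symm)
  rintro rfl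
  exact hpw.not_isTall hqt

lemma card_wideBins_add_card_tallBins_le {m : ℕ} (hm : ∀ p ∈ h, p.bin < m) :
    (wideBins h).card + (tallBins h).card ≤ m := by
  rw [← Finset.card_union_of_disjoint hh.disjoint_wideBins_tallBins, ← Finset.card_range m]
  refine Finset.card_le_card fun b hb => Finset.mem_range.2 ?_
  simp only [wideBins, tallBins, Finset.mem_union, List.mem_toFinset, List.mem_map,
    List.mem_filter] at hb
  obtain ⟨p, ⟨hp, -⟩, rfl⟩ | ⟨p, ⟨hp, -⟩, rfl⟩ := hb <;> exact hm p hp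

section single_bin

variable {b : ℕ} (hb : ∀ p ∈ h, p.bin = b)
include hb

lemma nodup_y_of_full_width {P : LSkel → Prop} [DecidablePred P] (hP : ∀ L, P L → L.lx = 1) :
    ((h.filter fun p => P p.toLSkel).map Placed.y).Nodup := by
  refine List.pairwise_map.2 ((hh.compatible.filter _).imp_of_mem fun {p q} hp hq hpq => ?_)
  rw [List.mem_filter, decide_eq_true_eq] at hp hq
  exact (hpq ((hb p hp.1).trans (hb q hq.1).symm)).y_ne_of_full_width (hh.fits p hp.1)
    (hh.fits q hq.1) (hP _ hp.2) (hP _ hq.2)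

lemma nodup_x_of_full_height {P : LSkel → Prop} [DecidablePred P] (hP : ∀ L, P L → L.ly = 1) :
    ((h.filter fun p => P p.toLSkel).map Placed.x).Nodup := by
  refine List.pairwise_map.2 ((hh.compatible.filter _).imp_of_mem fun {p q} hp hq hpq => ?_)
  rw [List.mem_filter, decide_eq_true_eq] at hp hq
  exact (hpq ((hb p hp.1).trans (hb q hq.1).symm)).x_ne_of_full_height (hh.fits p hp.1)
    (hh.fits q hq.1) (hP _ hp.2) (hP _ hq.2)

lemma exists_interior_full_width (need : NeedsHBin (items h)) :
    ∃ p ∈ h, p.lx = 1 ∧ p.y ≠ 0 ∧ p.y ≠ 1 := by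
  rcases need with three | two
  · rw [hsegCount_items] at three
    obtain ⟨p, hp, hy⟩ := exists_notMem_of_nodup_map (ends := [0, 1])
      (hh.nodup_y_of_full_width hb fun _ => LSkel.IsHSeg.lx_eq) three
    rw [List.mem_filter, decide_eq_true_eq] at hp
    simp only [List.mem_cons, List.not_mem_nil, or_false, not_or] at hy
    exact ⟨p, hp.1, hp.2.lx_eq, hy⟩
  · rw [wideCount_items] at two
    obtain ⟨p, hp, hy⟩ := exists_notMem_of_nodup_map (ends := [0])
      (hh.nodup_y_of_full_width hb fun _ => LSkel.IsWide.lx_eq) two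
    rw [List.mem_filter, decide_eq_true_eq] at hp
    have top := (hh.fits p hp.1).top_le
    exact ⟨p, hp.1, hp.2.lx_eq, List.mem_singleton.not.1 hy, by linarith [hp.2.ly_pos]⟩

lemma not_needsVBin_of_needsHBin (need : NeedsHBin (items h)) : ¬NeedsVBin (items h) := by
  obtain ⟨p, hp, hpx, hy0, hy1⟩ := hh.exists_interior_full_width hb need
  rintro (three | high)
  · rw [vsegCount_items] at three
    obtain ⟨q, hq, hx⟩ := exists_notMem_of_nodup_map (ends := [0, 1])
      (hh.nodup_x_of_full_height hb fun _ => LSkel.IsVSeg.ly_eq) three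
    rw [List.mem_filter, decide_eq_true_eq] at hq
    obtain ⟨hq, hqv⟩ := hq
    simp only [List.mem_cons, List.not_mem_nil, or_false, not_or] at hx
    have hqx := hqv.lx_eq
    have hpq : p ≠ q := by rintro rfl; linarith
    have fit := hh.fits q hq
    have compat := hh.compatible_of_mem hp hq hpq ((hb p hp).trans (hb q hq).symm)
    rcases compat.y_eq_zero_or_one (hh.fits p hp) fit hpx hqv.ly_eq
      (lt_of_le_of_ne fit.x_nonneg (Ne.symm hx.1))
      (lt_of_le_of_ne (by linarith [fit.right_le]) hx.2) with h | h
    exacts [hy0 h, hy1 h]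
  · have one_bin : ((wideBins h).card : ℝ) ≤ 1 := by exact_mod_cast card_wideBins_le_one hb
    linarith [hh.wideHeight_le_card_wideBins]

end single_bin

lemma two_le_of_needsHBin_of_needsVBin {m : ℕ} (hm : ∀ p ∈ h, p.bin < m)
    (needH : NeedsHBin (items h)) (needV : NeedsVBin (items h)) : 2 ≤ m := by
  by_contra! hm'
  exact hh.not_needsVBin_of_needsHBin (b := 0) (fun p hp => by have := hm p hp; omega) needH needV

end IsPacking

/-! ### Next fit with paired groups -/

/-- Bookkeeping of next fit for items of size in `(0, 1]` and total size `total`: odd-numbered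
groups are stacks of capacity one, and the first item that does not fit on a stack forms the
even-numbered group after it, so that a stack together with its overflow exceeds one. The current
group has number `groups`; its items occupy at most `load`, which is set to `1` for an overflow
group, as such a group receives no further item. -/
inductive NextFit : (groups : ℕ) → (load total : ℝ) → Prop
  | empty : NextFit 0 0 0
  | stack (pairs : ℕ) {load total : ℝ} (load_pos : 0 < load) (load_le : load ≤ 1)
      (le_total : pairs + load ≤ total) : NextFit (2 * pairs + 1) load total
  | overflow (pairs : ℕ) {total : ℝ} (lt_total : pairs + 1 < total) :
      NextFit (2 * pairs + 2) 1 total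

namespace NextFit

variable {r : ℕ} {s S a : ℝ}

lemma step (h : NextFit r s S) (ha : 0 < a) (ha' : a ≤ 1) :
    (Odd r ∧ s + a ≤ 1 ∧ NextFit r (s + a) (S + a)) ∨
      ∃ s', a ≤ s' ∧ NextFit (r + 1) s' (S + a) := by
  cases h with
  | empty => exact .inr ⟨a, le_rfl, .stack 0 ha ha' (by simp)⟩
  | stack q pos _ total =>
    by_cases hfit : s + a ≤ 1
    · exact .inl ⟨odd_two_mul_add_one q, hfit, .stack q (by linarith) hfit (by linarith)⟩
    · exact .inr ⟨1, ha', .overflow q (by linarith)⟩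
  | overflow q total =>
    exact .inr ⟨a, le_rfl, .stack (q + 1) ha ha' (by push_cast; linarith)⟩

lemma load_pos (h : NextFit r s S) (hr : 0 < r) : 0 < s := by
  cases h with
  | empty => omega
  | stack _ pos => exact pos
  | overflow => exact one_pos

lemma total_pos (h : NextFit r s S) (hr : 0 < r) : 0 < S := by
  cases h with
  | empty => omega
  | stack q => linarith [q.cast_nonneg (α := ℝ)]
  | overflow q => linarith [q.cast_nonneg (α := ℝ)]

lemma one_lt_total (h : NextFit r s S) (hr : 2 ≤ r) : 1 < S := by
  cases h with
  | empty => omega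
  | stack q =>
    have hq : (1 : ℝ) ≤ q := by exact_mod_cast (by omega : 1 ≤ q)
    linarith
  | overflow q => linarith [q.cast_nonneg (α := ℝ)]

lemma groups_lt_two_mul {k : ℕ} (h : NextFit r s S) (hr : 0 < r) (hk : S ≤ k) : r < 2 * k := by
  cases h with
  | empty => omega
  | stack q =>
    have hq : q < k := by exact_mod_cast (by linarith : (q : ℝ) < k)
    omega
  | overflow q =>
    have hq : q + 1 < k := by exact_mod_cast (by linarith : (q : ℝ) + 1 < k)
    omega

end NextFit

/-! ### The invariant of the algorithm -/

/-- The memory of the algorithm: which of the bins `1` and `2` receives interior full-width items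
and which one receives interior full-height items, and the current next-fit group of the wide
and of the tall items with its load. -/
structure State where
  hBin : ℕ
  vBin : ℕ
  wideGroups : ℕ
  wideLoad : ℝ
  tallGroups : ℕ
  tallLoad : ℝ

/-- The names `1` and `2` are distributed so that bin `1` belongs to the first direction that needs
a bin of its own. -/
structure State.BinsOk (σ : State) (l : List LSkel) : Prop where
  names : σ.hBin = 1 ∧ σ.vBin = 2 ∨ σ.hBin = 2 ∧ σ.vBin = 1
  hBin_eq : NeedsHBin l → ¬NeedsVBin l → σ.hBin = 1
  vBin_eq : NeedsVBin l → ¬NeedsHBin l → σ.vBin = 1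

/-- The memory `σ'` may follow `σ`: groups are only filled or opened. -/
structure State.Precedes (σ σ' : State) : Prop where
  hBin_eq : σ'.hBin = σ.hBin
  vBin_eq : σ'.vBin = σ.vBin
  wideGroups_le : σ.wideGroups ≤ σ'.wideGroups
  wideLoad_le : σ.wideGroups = σ'.wideGroups → σ.wideLoad ≤ σ'.wideLoad
  tallGroups_le : σ.tallGroups ≤ σ'.tallGroups
  tallLoad_le : σ.tallGroups = σ'.tallGroups → σ.tallLoad ≤ σ'.tallLoad

/-- The positions at which the algorithm places items, for the input `l` and the memory `σ`.
Bin `0` takes small items on its diagonal and the first wide item (`lead`) at its corner. Since the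
lead counts for the load of the first stack, the rest of that stack (`firstStack`) leaves a gap,
which keeps its heights flexible enough to avoid the segments (`hLine`) in the same bin. -/
inductive Slot (l : List LSkel) (σ : State) (p : Placed) : Prop
  | small (lx_nonneg : 0 ≤ p.lx) (ly_nonneg : 0 ≤ p.ly) (x_pos : 0 < p.x) (diag : p.y = p.x)
      (x_lt : p.x < 1) (right_le : p.x + p.lx ≤ 1) (top_le : p.y + p.ly ≤ 1) (bin_eq : p.bin = 0)
  | topEdge (lx_eq : p.lx = 1) (ly_eq : p.ly = 0) (x_eq : p.x = 0) (y_eq : p.y = 1)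
      (bin_lt_two : p.bin < 2) (bin_lt : p.bin < hsegCount l)
  | rightEdge (lx_eq : p.lx = 0) (ly_eq : p.ly = 1) (x_eq : p.x = 1) (y_eq : p.y = 0)
      (bin_lt_two : p.bin < 2) (bin_lt : p.bin < vsegCount l)
  | hLine (lx_eq : p.lx = 1) (ly_eq : p.ly = 0) (x_eq : p.x = 0) (y_pos : 0 < p.y) (y_lt : p.y < 1)
      (bin_eq : p.bin = σ.hBin) (need : NeedsHBin l)
  | vLine (lx_eq : p.lx = 0) (ly_eq : p.ly = 1) (y_eq : p.y = 0) (x_pos : 0 < p.x) (x_lt : p.x < 1)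
      (bin_eq : p.bin = σ.vBin) (need : NeedsVBin l)
  | lead (lx_eq : p.lx = 1) (ly_pos : 0 < p.ly) (ly_le : p.ly ≤ 1) (x_eq : p.x = 0) (y_eq : p.y = 0)
      (bin_eq : p.bin = 0) (group : 1 ≤ σ.wideGroups)
  | firstStack (lx_eq : p.lx = 1) (ly_pos : 0 < p.ly) (x_eq : p.x = 0) (y_pos : 0 < p.y)
      (top_le : p.y + p.ly ≤ 1) (bin_eq : p.bin = σ.hBin) (need : NeedsHBin l)
      (group : 1 ≤ σ.wideGroups) (top_lt : σ.wideGroups = 1 → p.y + p.ly < σ.wideLoad)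
  | overflow (lx_eq : p.lx = 1) (ly_pos : 0 < p.ly) (ly_le : p.ly ≤ 1) (x_eq : p.x = 0)
      (y_eq : p.y = 0) (bin_eq : p.bin = σ.vBin) (need : NeedsVBin l) (group : 2 ≤ σ.wideGroups)
  | wideGroup (j : ℕ) (lx_eq : p.lx = 1) (ly_pos : 0 < p.ly) (x_eq : p.x = 0) (y_nonneg : 0 ≤ p.y)
      (top_le : p.y + p.ly ≤ 1) (bin_eq : p.bin = 2 * j + 1) (le_group : 3 ≤ j)
      (group_le : j ≤ σ.wideGroups) (top_le_load : j = σ.wideGroups → p.y + p.ly ≤ σ.wideLoad)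
  | tallGroup (j : ℕ) (ly_eq : p.ly = 1) (lx_pos : 0 < p.lx) (y_eq : p.y = 0) (x_nonneg : 0 ≤ p.x)
      (right_le : p.x + p.lx ≤ 1) (bin_eq : p.bin = 2 * j + 2) (le_group : 1 ≤ j)
      (group_le : j ≤ σ.tallGroups) (right_le_load : j = σ.tallGroups → p.x + p.lx ≤ σ.tallLoad)

/-- The invariant maintained by the algorithm. The last field says that the first item that is wide
or tall was wide. -/
structure Invariant (h : List Placed) (σ : State) : Prop where
  compatible : h.Pairwise fun p q => p.bin = q.bin → p.Compatible q
  slot : ∀ p ∈ h, Slot (items h) σ p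
  bins : σ.BinsOk (items h)
  wide : NextFit σ.wideGroups σ.wideLoad (wideHeight (items h))
  tall : NextFit σ.tallGroups σ.tallLoad (tallWidth (items h))
  wide_first : 0 < σ.tallGroups → 0 < σ.wideGroups

lemma invariant_nil : Invariant [] ⟨1, 2, 0, 0, 0, 0⟩ where
  compatible := .nil
  slot := by simp
  bins := ⟨.inl ⟨rfl, rfl⟩, fun _ _ => rfl, fun need => by
    norm_num [NeedsVBin, items, vsegCount, wideHeight] at need⟩
  wide := by simpa [items, wideHeight] using NextFit.empty
  tall := by simpa [items, tallWidth] using NextFit.empty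
  wide_first := id

lemma Slot.fits {l : List LSkel} {σ : State} {p : Placed} (h : Slot l σ p) : p.Fits := by
  cases h <;> constructor <;> linarith

lemma Slot.append {l : List LSkel} {σ σ' : State} {p : Placed} (h : Slot l σ p) (L : LSkel)
    (hσ : σ.Precedes σ') : Slot (l ++ [L]) σ' p := by
  obtain ⟨hBin_eq, vBin_eq, wideGroups_le, wideLoad_le, tallGroups_le, tallLoad_le⟩ := hσ
  cases h with
  | small => constructor <;> assumption
  | topEdge _ _ _ _ _ hbin => exact .topEdge ‹_› ‹_› ‹_› ‹_› ‹_› (hbin.trans_le hsegCount_le_append)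
  | rightEdge _ _ _ _ _ hbin =>
    exact .rightEdge ‹_› ‹_› ‹_› ‹_› ‹_› (hbin.trans_le vsegCount_le_append)
  | hLine _ _ _ _ _ _ need => exact .hLine ‹_› ‹_› ‹_› ‹_› ‹_› (by omega) need.append
  | vLine _ _ _ _ _ _ need => exact .vLine ‹_› ‹_› ‹_› ‹_› ‹_› (by omega) need.append
  | lead => exact .lead ‹_› ‹_› ‹_› ‹_› ‹_› ‹_› (by omega)
  | firstStack _ _ _ _ _ _ need _ top_lt =>
    refine .firstStack ‹_› ‹_› ‹_› ‹_› ‹_› (by omega) need.append (by omega) fun h => ?_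
    exact (top_lt (by omega)).trans_le (wideLoad_le (by omega))
  | overflow _ _ _ _ _ _ need =>
    exact .overflow ‹_› ‹_› ‹_› ‹_› ‹_› (by omega) need.append (by omega)
  | wideGroup j _ _ _ _ _ _ _ _ top_le_load =>
    refine .wideGroup j ‹_› ‹_› ‹_› ‹_› ‹_› ‹_› ‹_› (by omega) fun h => ?_
    exact (top_le_load (by omega)).trans (wideLoad_le (by omega))
  | tallGroup j _ _ _ _ _ _ _ _ right_le_load =>
    refine .tallGroup j ‹_› ‹_› ‹_› ‹_› ‹_› ‹_› ‹_› (by omega) fun h => ?_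
    exact (right_le_load (by omega)).trans (tallLoad_le (by omega))

namespace Invariant

variable {h : List Placed} {σ : State}

lemma isPacking (H : Invariant h σ) : IsPacking h := ⟨fun p hp => (H.slot p hp).fits, H.compatible⟩

lemma ly_le_one (H : Invariant h σ) : ∀ L ∈ items h, L.ly ≤ 1 :=
  List.forall_mem_map.2 fun p hp => by
    obtain ⟨-, -, -, hy, -, top⟩ := (H.slot p hp).fits
    linarith

lemma needsHBin_of_two_le (H : Invariant h σ) (hr : 2 ≤ σ.wideGroups) : NeedsHBin (items h) :=
  .inr (two_le_wideCount H.ly_le_one (H.wide.one_lt_total hr))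

lemma needsVBin_of_two_le (H : Invariant h σ) (hr : 2 ≤ σ.wideGroups) : NeedsVBin (items h) :=
  .inr (H.wide.one_lt_total hr)

lemma wideCount_pos (H : Invariant h σ) (hr : 0 < σ.wideGroups) : 0 < wideCount (items h) := by
  exact_mod_cast (H.wide.total_pos hr).trans_le (wideHeight_le_wideCount H.ly_le_one)

/-- The bins `1` and `2` can still be exchanged as long as neither direction needs one, because no
slot refers to them. -/
lemma rename_bins (H : Invariant h σ) (hH : ¬NeedsHBin (items h)) (hV : ¬NeedsVBin (items h))
    {b c : ℕ} (names : b = 1 ∧ c = 2 ∨ b = 2 ∧ c = 1) :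
    Invariant h { σ with hBin := b, vBin := c } where
  __ := H
  slot p hp := by
    cases H.slot p hp with
    | hLine _ _ _ _ _ _ need => exact absurd need hH
    | vLine _ _ _ _ _ _ need => exact absurd need hV
    | firstStack _ _ _ _ _ _ need => exact absurd need hH
    | overflow _ _ _ _ _ _ need => exact absurd need hV
    | small => constructor <;> assumption
    | topEdge => exact .topEdge ‹_› ‹_› ‹_› ‹_› ‹_› ‹_›
    | rightEdge => exact .rightEdge ‹_› ‹_› ‹_› ‹_› ‹_› ‹_›
    | lead => exact .lead ‹_› ‹_› ‹_› ‹_› ‹_› ‹_› ‹_›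
    | wideGroup j => exact .wideGroup j ‹_› ‹_› ‹_› ‹_› ‹_› ‹_› ‹_› ‹_› ‹_›
    | tallGroup j => exact .tallGroup j ‹_› ‹_› ‹_› ‹_› ‹_› ‹_› ‹_› ‹_› ‹_›
  bins := ⟨names, fun need => absurd need hH, fun need => absurd need hV⟩

lemma exists_binsOk_append (H : Invariant h σ) (L : LSkel) :
    ∃ σ', Invariant h σ' ∧ σ'.BinsOk (items h ++ [L]) ∧ σ'.wideGroups = σ.wideGroups := by
  by_cases need : NeedsHBin (items h) ∨ NeedsVBin (items h)
  · refine ⟨σ, H, ⟨H.bins.names, fun _ hV => ?_, fun _ hH => ?_⟩, rfl⟩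
    · have hV' : ¬NeedsVBin (items h) := fun hV' => hV hV'.append
      exact H.bins.hBin_eq (need.resolve_right hV') hV'
    · have hH' : ¬NeedsHBin (items h) := fun hH' => hH hH'.append
      exact H.bins.vBin_eq (need.resolve_left hH') hH'
  · rw [not_or] at need
    by_cases hH : NeedsHBin (items h ++ [L])
    · exact ⟨_, H.rename_bins need.1 need.2 (.inl ⟨rfl, rfl⟩),
        ⟨.inl ⟨rfl, rfl⟩, fun _ _ => rfl, fun _ hH' => absurd hH hH'⟩, rfl⟩
    · exact ⟨_, H.rename_bins need.1 need.2 (.inr ⟨rfl, rfl⟩),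
        ⟨.inr ⟨rfl, rfl⟩, fun hH' => absurd hH' hH, fun _ _ => rfl⟩, rfl⟩

section append

variable {p : Placed} (H : Invariant h σ) (bins : σ.BinsOk (items h ++ [p.toLSkel]))
  (compat : ∀ q ∈ h, q.bin = p.bin → q.Compatible p)
include H bins compat

lemma append {σ' : State} (hσ : σ.Precedes σ') (slot : Slot (items h ++ [p.toLSkel]) σ' p)
    (wide : NextFit σ'.wideGroups σ'.wideLoad (wideHeight (items h ++ [p.toLSkel])))
    (tall : NextFit σ'.tallGroups σ'.tallLoad (tallWidth (items h ++ [p.toLSkel])))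
    (wide_first : 0 < σ'.tallGroups → 0 < σ'.wideGroups) : Invariant (h ++ [p]) σ' where
  compatible := List.pairwise_append.2 ⟨H.compatible, by simp, by simpa using compat⟩
  slot := by
    rw [items_append_singleton, List.forall_mem_append, List.forall_mem_singleton]
    exact ⟨fun q hq => (H.slot q hq).append _ hσ, slot⟩
  bins := by
    rw [items_append_singleton]
    exact ⟨by rw [hσ.hBin_eq, hσ.vBin_eq]; exact bins.names, hσ.hBin_eq ▸ bins.hBin_eq,
      hσ.vBin_eq ▸ bins.vBin_eq⟩
  wide := by rwa [items_append_singleton]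
  tall := by rwa [items_append_singleton]
  wide_first := wide_first

lemma append_of_not_wide_of_not_tall (not_wide : ¬p.IsWide) (not_tall : ¬p.IsTall)
    (slot : Slot (items h ++ [p.toLSkel]) σ p) : Invariant (h ++ [p]) σ := by
  refine H.append bins compat ⟨rfl, rfl, le_rfl, fun _ => le_rfl, le_rfl, fun _ => le_rfl⟩ slot
    ?_ ?_ H.wide_first
  · rw [wideHeight_append_of_not_isWide not_wide]
    exact H.wide
  · rw [tallWidth_append_of_not_isTall not_tall]
    exact H.tall

lemma append_wide {r : ℕ} {s : ℝ} (hp : p.IsWide) (hr : 0 < r) (groups_le : σ.wideGroups ≤ r)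
    (load_le : σ.wideGroups = r → σ.wideLoad ≤ s)
    (wide : NextFit r s (wideHeight (items h) + p.ly))
    (slot : Slot (items h ++ [p.toLSkel]) { σ with wideGroups := r, wideLoad := s } p) :
    Invariant (h ++ [p]) { σ with wideGroups := r, wideLoad := s } := by
  refine H.append bins compat ⟨rfl, rfl, groups_le, load_le, le_rfl, fun _ => le_rfl⟩ slot ?_ ?_
    fun _ => hr
  · rwa [wideHeight_append_of_isWide hp]
  · rw [tallWidth_append_of_not_isTall hp.not_isTall]
    exact H.tall

lemma append_tall {r : ℕ} {s : ℝ} (hp : p.IsTall) (wide_pos : 0 < σ.wideGroups)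
    (groups_le : σ.tallGroups ≤ r) (load_le : σ.tallGroups = r → σ.tallLoad ≤ s)
    (tall : NextFit r s (tallWidth (items h) + p.lx))
    (slot : Slot (items h ++ [p.toLSkel]) { σ with tallGroups := r, tallLoad := s } p) :
    Invariant (h ++ [p]) { σ with tallGroups := r, tallLoad := s } := by
  refine H.append bins compat ⟨rfl, rfl, le_rfl, fun _ => le_rfl, groups_le, load_le⟩ slot ?_ ?_
    fun _ => wide_pos
  · rw [wideHeight_append_of_not_isWide fun hw => hw.not_isTall hp]
    exact H.wide
  · rwa [tallWidth_append_of_isTall hp]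

end append

end Invariant

/-! ### Placing the next item -/

lemma exists_placed (L : LSkel) (x y : ℝ) (b : ℕ) :
    ∃ p : Placed, p.toLSkel = L ∧ p.x = x ∧ p.y = y ∧ p.bin = b :=
  ⟨⟨L, x, y, b⟩, rfl, rfl, rfl, rfl⟩

lemma exists_between_forall_ne_and_lt {α : Type*} (l : List α) (f g : α → ℝ) {s : ℝ} (hs : 0 < s) :
    ∃ t, 0 < t ∧ t < s ∧ ∀ a ∈ l, f a ≠ t ∧ (g a < s → g a < t) := by
  obtain ⟨t, above, below⟩ := Order.exists_between_finsets
    (lo := insert 0 {a ∈ (l.map f ++ l.map g).toFinset | a < s}) (hi := {s}) (by simpa using hs)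
  simp only [Finset.mem_insert, Finset.mem_filter, List.mem_toFinset, Finset.mem_singleton,
    List.mem_append, forall_eq_or_imp, forall_eq] at above below
  refine ⟨t, above.1, below, fun a ha => ⟨?_, fun hg =>
    above.2 _ ⟨.inr (List.mem_map_of_mem ha), hg⟩⟩⟩
  rcases lt_or_ge (f a) s with hf | hf
  · exact (above.2 _ ⟨.inl (List.mem_map_of_mem ha), hf⟩).ne
  · exact (below.trans_le hf).ne'

lemma exists_between_forall_ne {α : Type*} (l : List α) (f : α → ℝ) {s : ℝ} (hs : 0 < s) :
    ∃ t, 0 < t ∧ t < s ∧ ∀ a ∈ l, f a ≠ t := by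
  obtain ⟨t, ht0, hts, ht⟩ := exists_between_forall_ne_and_lt l f f hs
  exact ⟨t, ht0, hts, fun a ha => (ht a ha).1⟩

namespace Invariant

open Placed

variable {h : List Placed} {σ : State} {L : LSkel} (H : Invariant h σ)
  (bins : σ.BinsOk (items h ++ [L]))
include H bins

lemma exists_append_of_isSmall (valid : L.IsValid) (hL : L.IsSmall) :
    ∃ p σ', p.toLSkel = L ∧ Invariant (h ++ [p]) σ' := by
  obtain ⟨t, t_pos, t_lt, t_ne⟩ :=
    exists_between_forall_ne h Placed.x (sub_pos.2 (max_lt hL.lx_lt hL.ly_lt))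
  have := le_max_left L.lx L.ly
  have := le_max_right L.lx L.ly
  obtain ⟨lx_nonneg, -, ly_nonneg, -⟩ := valid
  have names := bins.names
  obtain ⟨p, rfl, hx, hy, hb⟩ := exists_placed L t t 0
  refine ⟨p, σ, rfl, H.append_of_not_wide_of_not_tall bins (fun q hq hbin => ?_) hL.not_isWide
    hL.not_isTall (.small ‹_› ‹_› ?_ ?_ ?_ ?_ ?_ hb)⟩
  · cases H.slot q hq with
    | small =>
      rcases lt_or_gt_of_ne (t_ne q hq) with hlt | hgt
      · exact compatible_of_nested (by linarith) (by linarith)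
      · exact (compatible_of_nested (by linarith) (by linarith)).symm
    | topEdge => exact (compatible_of_top_edge ‹_› ‹_› (by linarith) (by linarith)).symm
    | rightEdge => exact (compatible_of_right_edge ‹_› ‹_› (by linarith) (by linarith)).symm
    | lead => exact compatible_of_nested (by linarith) (by linarith)
    | _ => omega
  all_goals linarith

lemma exists_append_of_isHSeg (hL : L.IsHSeg) :
    ∃ p σ', p.toLSkel = L ∧ Invariant (h ++ [p]) σ' := by
  obtain ⟨lx_eq, ly_eq⟩ := id hL
  have names := bins.names
  have count := hsegCount_append_of_isHSeg (l := items h) hL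
  by_cases two : hsegCount (items h) < 2
  · obtain ⟨p, rfl, hx, hy, hb⟩ := exists_placed L 0 1 (hsegCount (items h))
    refine ⟨p, σ, rfl, H.append_of_not_wide_of_not_tall bins (fun q hq hbin => ?_) hL.not_isWide
      hL.not_isTall (.topEdge lx_eq ly_eq hx hy (by omega) (by omega))⟩
    refine compatible_of_top_edge ly_eq hy ?_ (H.slot q hq).fits.top_le
    cases H.slot q hq <;> linarith
  · obtain ⟨t, t_pos, t_lt, t_ne⟩ := exists_between_forall_ne h Placed.y one_pos
    obtain ⟨p, rfl, hx, hy, hb⟩ := exists_placed L 0 t σ.hBin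
    refine ⟨p, σ, rfl, H.append_of_not_wide_of_not_tall bins (fun q hq hbin => ?_) hL.not_isWide
      hL.not_isTall (.hLine lx_eq ly_eq hx (by linarith) (by linarith) hb (.inl (by omega)))⟩
    cases H.slot q hq with
    | topEdge => exact (compatible_of_top_edge ‹_› ‹_› (by linarith) (by linarith)).symm
    | rightEdge => exact (compatible_of_right_edge ‹_› ‹_› (by linarith) (by linarith)).symm
    | hLine | firstStack =>
      exact compatible_of_left_aligned (by linarith) (by linarith) (by linarith)
        (hy ▸ t_ne q hq) (.inr (.inr ly_eq))
    | _ => omega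

lemma exists_append_of_isVSeg (hL : L.IsVSeg) :
    ∃ p σ', p.toLSkel = L ∧ Invariant (h ++ [p]) σ' := by
  obtain ⟨lx_eq, ly_eq⟩ := id hL
  have names := bins.names
  have count := vsegCount_append_of_isVSeg (l := items h) hL
  by_cases two : vsegCount (items h) < 2
  · obtain ⟨p, rfl, hx, hy, hb⟩ := exists_placed L 1 0 (vsegCount (items h))
    refine ⟨p, σ, rfl, H.append_of_not_wide_of_not_tall bins (fun q hq hbin => ?_) hL.not_isWide
      hL.not_isTall (.rightEdge lx_eq ly_eq hx hy (by omega) (by omega))⟩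
    refine compatible_of_right_edge lx_eq hx ?_ (H.slot q hq).fits.right_le
    cases H.slot q hq <;> linarith
  · obtain ⟨t, t_pos, t_lt, t_ne⟩ := exists_between_forall_ne h Placed.x one_pos
    obtain ⟨p, rfl, hx, hy, hb⟩ := exists_placed L t 0 σ.vBin
    refine ⟨p, σ, rfl, H.append_of_not_wide_of_not_tall bins (fun q hq hbin => ?_) hL.not_isWide
      hL.not_isTall (.vLine lx_eq ly_eq hy (by linarith) (by linarith) hb (.inl (by omega)))⟩
    cases H.slot q hq with
    | topEdge => exact (compatible_of_top_edge ‹_› ‹_› (by linarith) (by linarith)).symm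
    | rightEdge => exact (compatible_of_right_edge ‹_› ‹_› (by linarith) (by linarith)).symm
    | vLine | overflow =>
      exact compatible_of_bottom_aligned (by linarith) (by linarith) (by linarith)
        (hx ▸ t_ne q hq) (.inr (.inr lx_eq))
    | _ => omega

lemma exists_append_lead {s : ℝ} (hL : L.IsWide) (ly_le : L.ly ≤ 1) (hr : σ.wideGroups = 0)
    (wide : NextFit 1 s (wideHeight (items h) + L.ly)) :
    ∃ p σ', p.toLSkel = L ∧ Invariant (h ++ [p]) σ' := by
  obtain ⟨lx_eq, ly_pos⟩ := id hL
  have names := bins.names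
  obtain ⟨p, rfl, hx, hy, hb⟩ := exists_placed L 0 0 0
  refine ⟨p, _, rfl, H.append_wide bins (fun q hq hbin => ?_) hL one_pos (by omega) (by omega) wide
    (.lead lx_eq ly_pos ly_le hx hy hb le_rfl)⟩
  cases H.slot q hq with
  | small => exact (compatible_of_nested (by linarith) (by linarith)).symm
  | topEdge => exact (compatible_of_top_edge ‹_› ‹_› (by linarith) (by linarith)).symm
  | rightEdge => exact (compatible_of_right_edge ‹_› ‹_› (by linarith) (by linarith)).symm
  | _ => omega

lemma exists_append_firstStack (hL : L.IsWide) (hr : σ.wideGroups = 1) (fit : σ.wideLoad + L.ly ≤ 1)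
    (wide : NextFit 1 (σ.wideLoad + L.ly) (wideHeight (items h) + L.ly)) :
    ∃ p σ', p.toLSkel = L ∧ Invariant (h ++ [p]) σ' := by
  obtain ⟨lx_eq, ly_pos⟩ := id hL
  have names := bins.names
  have need : NeedsHBin (items h ++ [L]) := by
    have := H.wideCount_pos (by omega)
    exact .inr (by rw [wideCount_append_of_isWide hL]; omega)
  have load_pos := H.wide.load_pos (by omega)
  obtain ⟨t, t_pos, t_lt, ht⟩ :=
    exists_between_forall_ne_and_lt h Placed.y (fun q => q.y + q.ly) load_pos
  obtain ⟨p, rfl, hx, hy, hb⟩ := exists_placed L 0 t σ.hBin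
  refine ⟨p, _, rfl, H.append_wide bins (fun q hq hbin => ?_) hL one_pos (by omega)
    (fun _ => by linarith) wide
    (.firstStack lx_eq ly_pos hx (by linarith) (by linarith) hb need le_rfl fun _ => ?_)⟩
  · cases H.slot q hq with
    | topEdge => exact (compatible_of_top_edge ‹_› ‹_› (by linarith) (by linarith)).symm
    | rightEdge => exact (compatible_of_right_edge ‹_› ‹_› (by linarith) (by linarith)).symm
    | hLine =>
      exact compatible_of_left_aligned (by linarith) ly_pos.le (by linarith)
        (hy ▸ (ht q hq).1) (.inr (.inl ‹_›))
    | firstStack _ _ _ _ _ _ _ _ top_lt =>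
      exact compatible_of_left_aligned (by linarith) ly_pos.le (by linarith)
        (hy ▸ (ht q hq).1) (.inl (hy ▸ ((ht q hq).2 (top_lt hr)).le))
    | _ => omega
  · change p.y + p.ly < σ.wideLoad + p.ly
    linarith

lemma exists_append_overflow {s : ℝ} (hL : L.IsWide) (ly_le : L.ly ≤ 1) (hr : σ.wideGroups = 1)
    (wide : NextFit 2 s (wideHeight (items h) + L.ly)) :
    ∃ p σ', p.toLSkel = L ∧ Invariant (h ++ [p]) σ' := by
  obtain ⟨lx_eq, ly_pos⟩ := id hL
  have names := bins.names
  have need : NeedsVBin (items h ++ [L]) := by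
    refine .inr ?_
    rw [wideHeight_append_of_isWide hL]
    exact wide.one_lt_total le_rfl
  obtain ⟨p, rfl, hx, hy, hb⟩ := exists_placed L 0 0 σ.vBin
  refine ⟨p, _, rfl, H.append_wide bins (fun q hq hbin => ?_) hL two_pos (by omega) (by omega) wide
    (.overflow lx_eq ly_pos ly_le hx hy hb need le_rfl)⟩
  cases H.slot q hq with
  | topEdge => exact (compatible_of_top_edge ‹_› ‹_› (by linarith) (by linarith)).symm
  | rightEdge => exact (compatible_of_right_edge ‹_› ‹_› (by linarith) (by linarith)).symm
  | vLine =>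
    exact compatible_of_bottom_aligned (by linarith) (by linarith) (by linarith)
      (by linarith) (.inr (.inl ‹_›))
  | _ => omega

lemma exists_append_wideGroup {r : ℕ} {y s : ℝ} (hL : L.IsWide) (hr : 3 ≤ r)
    (groups_le : σ.wideGroups ≤ r) (hy : 0 ≤ y) (load_le : σ.wideGroups = r → σ.wideLoad ≤ y)
    (top_le : y + L.ly ≤ 1) (top_le_load : y + L.ly ≤ s)
    (wide : NextFit r s (wideHeight (items h) + L.ly)) :
    ∃ p σ', p.toLSkel = L ∧ Invariant (h ++ [p]) σ' := by
  obtain ⟨lx_eq, ly_pos⟩ := id hL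
  have names := bins.names
  obtain ⟨p, rfl, hx, rfl, hb⟩ := exists_placed L 0 y (2 * r + 1)
  refine ⟨p, _, rfl, H.append_wide bins (fun q hq hbin => ?_) hL (by omega) groups_le
    (fun h => by linarith [load_le h]) wide
    (.wideGroup r lx_eq ly_pos hx hy top_le hb hr le_rfl fun _ => top_le_load)⟩
  cases H.slot q hq with
  | wideGroup j _ _ _ _ _ _ _ _ q_top_le =>
    have stacked : q.y + q.ly ≤ p.y := (q_top_le (by omega)).trans (load_le (by omega))
    exact compatible_of_left_aligned (by linarith) ly_pos.le (by linarith)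
      (by linarith) (.inl stacked)
  | _ => omega

lemma exists_append_of_isWide (valid : L.IsValid) (hL : L.IsWide) :
    ∃ p σ', p.toLSkel = L ∧ Invariant (h ++ [p]) σ' := by
  have ly_le := valid.2.2.2
  rcases H.wide.step hL.ly_pos ly_le with ⟨odd, fit, wide⟩ | ⟨s, hs, wide⟩
  · obtain ⟨k, hk⟩ := odd
    rcases k.eq_zero_or_pos with rfl | hk_pos
    · exact H.exists_append_firstStack bins hL hk fit (by rwa [hk] at wide)
    · exact H.exists_append_wideGroup bins hL (by omega) le_rfl (H.wide.load_pos (by omega)).le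
        (fun _ => le_rfl) fit le_rfl wide
  · rcases (by omega : σ.wideGroups = 0 ∨ σ.wideGroups = 1 ∨ 2 ≤ σ.wideGroups) with hr | hr | hr
    · exact H.exists_append_lead bins hL ly_le hr (by rwa [hr] at wide)
    · exact H.exists_append_overflow bins hL ly_le hr (by rwa [hr] at wide)
    · exact H.exists_append_wideGroup bins hL (by omega) (by omega) le_rfl (by omega)
        (by linarith) (by linarith) wide

lemma exists_append_tallGroup {r : ℕ} {x s : ℝ} (hL : L.IsTall) (wide_pos : 0 < σ.wideGroups)
    (hr : 1 ≤ r) (groups_le : σ.tallGroups ≤ r) (hx : 0 ≤ x)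
    (load_le : σ.tallGroups = r → σ.tallLoad ≤ x) (right_le : x + L.lx ≤ 1)
    (right_le_load : x + L.lx ≤ s) (tall : NextFit r s (tallWidth (items h) + L.lx)) :
    ∃ p σ', p.toLSkel = L ∧ Invariant (h ++ [p]) σ' := by
  obtain ⟨ly_eq, lx_pos, -⟩ := id hL
  have names := bins.names
  obtain ⟨p, rfl, rfl, hy, hb⟩ := exists_placed L x 0 (2 * r + 2)
  refine ⟨p, _, rfl, H.append_tall bins (fun q hq hbin => ?_) hL wide_pos groups_le
    (fun h => by linarith [load_le h]) tall
    (.tallGroup r ly_eq lx_pos hy hx right_le hb hr le_rfl fun _ => right_le_load)⟩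
  cases H.slot q hq with
  | tallGroup j _ _ _ _ _ _ _ _ q_right_le =>
    have stacked : q.x + q.lx ≤ p.x := (q_right_le (by omega)).trans (load_le (by omega))
    exact compatible_of_bottom_aligned (by linarith) lx_pos.le (by linarith)
      (by linarith) (.inl stacked)
  | _ => omega

lemma exists_append_of_isTall (valid : L.IsValid) (hL : L.IsTall) (wide_pos : 0 < σ.wideGroups) :
    ∃ p σ', p.toLSkel = L ∧ Invariant (h ++ [p]) σ' := by
  have lx_le := valid.2.1
  rcases H.tall.step hL.lx_pos lx_le with ⟨odd, fit, tall⟩ | ⟨s, hs, tall⟩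
  · exact H.exists_append_tallGroup bins hL wide_pos odd.pos le_rfl (H.tall.load_pos odd.pos).le
      (fun _ => le_rfl) fit le_rfl tall
  · exact H.exists_append_tallGroup bins hL wide_pos (by omega) (by omega) le_rfl (by omega)
      (by linarith) (by linarith) tall

omit bins in
lemma exists_append (valid : L.IsValid) (wide_first : L.IsTall → 0 < σ.wideGroups) :
    ∃ p σ', p.toLSkel = L ∧ Invariant (h ++ [p]) σ' := by
  obtain ⟨τ, Hτ, bins, groups_eq⟩ := H.exists_binsOk_append L
  rcases valid.classify with small | hseg | vseg | wide | tall
  · exact Hτ.exists_append_of_isSmall bins valid small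
  · exact Hτ.exists_append_of_isHSeg bins hseg
  · exact Hτ.exists_append_of_isVSeg bins vseg
  · exact Hτ.exists_append_of_isWide bins valid wide
  · exact Hτ.exists_append_of_isTall bins valid tall (groups_eq ▸ wide_first tall)

end Invariant

/-! ### Reflection in the diagonal -/

section without_wide_or_tall

variable {l : List LSkel}

lemma wideHeight_eq_zero (hl : ∀ L ∈ l, ¬L.IsWide) : wideHeight l = 0 := by
  rw [wideHeight, List.filter_eq_nil_iff.2 (by simpa using hl), List.map_nil, List.sum_nil]

lemma tallWidth_eq_zero (hl : ∀ L ∈ l, ¬L.IsTall) : tallWidth l = 0 := by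
  rw [tallWidth, List.filter_eq_nil_iff.2 (by simpa using hl), List.map_nil, List.sum_nil]

lemma needsHBin_iff (hl : ∀ L ∈ l, ¬L.IsWide) : NeedsHBin l ↔ 3 ≤ hsegCount l := by
  have count : wideCount l = 0 := List.countP_eq_zero.2 (by simpa using hl)
  simp [NeedsHBin, count]

lemma needsVBin_iff (hl : ∀ L ∈ l, ¬L.IsWide) : NeedsVBin l ↔ 3 ≤ vsegCount l := by
  simp [NeedsVBin, wideHeight_eq_zero hl, zero_le_one.not_gt]

variable (hl : ∀ L ∈ l, ¬L.IsWide ∧ ¬L.IsTall)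
include hl

lemma not_isWide_of_mem_map_swap : ∀ L ∈ l.map LSkel.swap, ¬L.IsWide :=
  List.forall_mem_map.2 fun L hL hw => hw.isWide_or_isTall_of_swap.elim (hl L hL).1 (hl L hL).2

lemma not_isTall_of_mem_map_swap : ∀ L ∈ l.map LSkel.swap, ¬L.IsTall :=
  List.forall_mem_map.2 fun L hL ht => (hl L hL).1 ht.swap

lemma needsHBin_map_swap : NeedsHBin (l.map LSkel.swap) ↔ NeedsVBin l := by
  rw [needsHBin_iff (not_isWide_of_mem_map_swap hl), needsVBin_iff fun L hL => (hl L hL).1,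
    hsegCount_map_swap]

lemma needsVBin_map_swap : NeedsVBin (l.map LSkel.swap) ↔ NeedsHBin l := by
  rw [needsVBin_iff (not_isWide_of_mem_map_swap hl), needsHBin_iff fun L hL => (hl L hL).1,
    vsegCount_map_swap]

end without_wide_or_tall

namespace Invariant

variable {h : List Placed} {σ : State}

lemma not_isWide_and_not_isTall (H : Invariant h σ) (no_wide : σ.wideGroups = 0) :
    ∀ L ∈ items h, ¬L.IsWide ∧ ¬L.IsTall := by
  have no_tall : σ.tallGroups = 0 := by have := H.wide_first; omega
  refine List.forall_mem_map.2 fun p hp => ?_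
  cases H.slot p hp with
  | small =>
    have hp : p.IsSmall := ⟨by linarith, by linarith⟩
    exact ⟨hp.not_isWide, hp.not_isTall⟩
  | topEdge lx_eq ly_eq =>
    have hp : p.IsHSeg := ⟨lx_eq, ly_eq⟩
    exact ⟨hp.not_isWide, hp.not_isTall⟩
  | hLine lx_eq ly_eq =>
    have hp : p.IsHSeg := ⟨lx_eq, ly_eq⟩
    exact ⟨hp.not_isWide, hp.not_isTall⟩
  | rightEdge lx_eq ly_eq =>
    have hp : p.IsVSeg := ⟨lx_eq, ly_eq⟩
    exact ⟨hp.not_isWide, hp.not_isTall⟩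
  | vLine lx_eq ly_eq =>
    have hp : p.IsVSeg := ⟨lx_eq, ly_eq⟩
    exact ⟨hp.not_isWide, hp.not_isTall⟩
  | _ => omega

lemma map_swap (H : Invariant h σ) (no_wide : σ.wideGroups = 0) :
    Invariant (h.map Placed.swap) ⟨σ.vBin, σ.hBin, 0, 0, 0, 0⟩ := by
  have neither := H.not_isWide_and_not_isTall no_wide
  have needsH_swap := needsHBin_map_swap neither
  have needsV_swap := needsVBin_map_swap neither
  refine ⟨H.isPacking.map_swap.compatible, List.forall_mem_map.2 fun p hp => ?_, ?_, ?_, ?_, id⟩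
  · rw [items_map_swap]
    cases H.slot p hp with
    | small _ _ x_pos diag x_lt =>
      exact .small ‹_› ‹_› (x_pos.trans_eq diag.symm) diag.symm (diag.trans_lt x_lt) ‹_› ‹_› ‹_›
    | topEdge => exact .rightEdge ‹_› ‹_› ‹_› ‹_› ‹_› (by rwa [vsegCount_map_swap])
    | rightEdge => exact .topEdge ‹_› ‹_› ‹_› ‹_› ‹_› (by rwa [hsegCount_map_swap])
    | hLine => exact .vLine ‹_› ‹_› ‹_› ‹_› ‹_› ‹_› (needsV_swap.2 ‹_›)
    | vLine => exact .hLine ‹_› ‹_› ‹_› ‹_› ‹_› ‹_› (needsH_swap.2 ‹_›)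
    | lead | firstStack | overflow | wideGroup => omega
    | tallGroup => have := H.wide_first; omega
  · rw [items_map_swap]
    obtain ⟨names, hBin_eq, vBin_eq⟩ := H.bins
    exact ⟨names.symm.imp And.symm And.symm, by rwa [needsH_swap, needsV_swap],
      by rwa [needsH_swap, needsV_swap]⟩
  · rw [items_map_swap, wideHeight_eq_zero (not_isWide_of_mem_map_swap neither)]
    exact .empty
  · rw [items_map_swap, tallWidth_eq_zero (not_isTall_of_mem_map_swap neither)]
    exact .empty

end Invariant

/-- The invariant holds up to reflection in the diagonal, depending on whether the first item that
is wide or tall was wide. -/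
def Good (h : List Placed) : Prop := ∃ σ, Invariant h σ ∨ Invariant (h.map Placed.swap) σ

lemma Placed.map_swap_map_swap (h : List Placed) : (h.map swap).map swap = h :=
  List.map_map.trans (List.map_id h)

lemma Good.map_swap {h : List Placed} : Good h → Good (h.map Placed.swap)
  | ⟨σ, .inl H⟩ => ⟨σ, .inr (by rwa [Placed.map_swap_map_swap])⟩
  | ⟨σ, .inr H⟩ => ⟨σ, .inl H⟩

lemma Good.append_swap {h : List Placed} {p : Placed} (good : Good (h.map Placed.swap ++ [p])) :
    Good (h ++ [p.swap]) := by
  simpa only [List.map_append, List.map_singleton, Placed.map_swap_map_swap] using good.map_swap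

lemma Invariant.exists_good_append {h : List Placed} {σ : State} {L : LSkel} (H : Invariant h σ)
    (valid : L.IsValid) : ∃ p : Placed, p.toLSkel = L ∧ Good (h ++ [p]) := by
  by_cases wide_first : L.IsTall → 0 < σ.wideGroups
  · obtain ⟨p, σ', hp, H'⟩ := H.exists_append valid wide_first
    exact ⟨p, hp, σ', .inl H'⟩
  · obtain ⟨tall, no_wide⟩ := Classical.not_imp.1 wide_first
    obtain ⟨p, σ', hp, H'⟩ := (H.map_swap (Nat.eq_zero_of_not_pos no_wide)).exists_append
      valid.swap fun tall' => absurd tall' tall.swap.not_isTall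
    exact ⟨p.swap, congrArg LSkel.swap hp, Good.append_swap ⟨σ', .inl H'⟩⟩

lemma Good.exists_append {h : List Placed} {L : LSkel} (good : Good h) (valid : L.IsValid) :
    ∃ p : Placed, p.toLSkel = L ∧ Good (h ++ [p]) := by
  obtain ⟨σ, H | H⟩ := good
  · exact H.exists_good_append valid
  · obtain ⟨p, hp, good⟩ := H.exists_good_append valid.swap
    exact ⟨p.swap, congrArg LSkel.swap hp, good.append_swap⟩

lemma Good.isPacking {h : List Placed} (good : Good h) : IsPacking h := by
  obtain ⟨σ, H | H⟩ := good
  · exact H.isPacking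
  · simpa only [Placed.map_swap_map_swap] using H.isPacking.map_swap

/-! ### Counting bins -/

open Classical in
/-- The bins the algorithm may have opened for the input `l` when its memory is `σ`. -/
noncomputable def State.openBins (σ : State) (l : List LSkel) : Finset ℕ :=
  Finset.range (if NeedsHBin l ∧ NeedsVBin l then 3 else 2) ∪
    ((Finset.Icc 3 σ.wideGroups).image (2 * · + 1) ∪
      (Finset.Icc 1 σ.tallGroups).image (2 * · + 2))

open Classical in
lemma State.card_openBins_le (σ : State) (l : List LSkel) : (σ.openBins l).card ≤
    (if NeedsHBin l ∧ NeedsVBin l then 3 else 2) + ((σ.wideGroups - 2) + σ.tallGroups) := by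
  refine (Finset.card_union_le _ _).trans (add_le_add (Finset.card_range _).le
    ((Finset.card_union_le _ _).trans (add_le_add ?_ ?_))) <;>
  exact Finset.card_image_le.trans (by rw [Nat.card_Icc]; omega)

lemma Slot.bin_mem_openBins {l : List LSkel} {σ : State} {p : Placed} (slot : Slot l σ p)
    (bins : σ.BinsOk l) : p.bin ∈ σ.openBins l := by
  have mem_of_lt_two (hp : p.bin < 2) : p.bin ∈ σ.openBins l :=
    Finset.mem_union_left _ (Finset.mem_range.2 (by split_ifs <;> omega))
  have mem_of_both (needH : NeedsHBin l) (needV : NeedsVBin l) (hp : p.bin < 3) :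
      p.bin ∈ σ.openBins l :=
    Finset.mem_union_left _ (by rwa [if_pos ⟨needH, needV⟩, Finset.mem_range])
  have mem_of_hBin (needH : NeedsHBin l) (hp : p.bin = σ.hBin) : p.bin ∈ σ.openBins l := by
    by_cases needV : NeedsVBin l
    · exact mem_of_both needH needV (by have := bins.names; omega)
    · exact mem_of_lt_two (by rw [hp, bins.hBin_eq needH needV]; norm_num)
  have mem_of_vBin (needV : NeedsVBin l) (hp : p.bin = σ.vBin) : p.bin ∈ σ.openBins l := by
    by_cases needH : NeedsHBin l
    · exact mem_of_both needH needV (by have := bins.names; omega)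
    · exact mem_of_lt_two (by rw [hp, bins.vBin_eq needV needH]; norm_num)
  cases slot with
  | small | topEdge | rightEdge | lead => exact mem_of_lt_two (by omega)
  | hLine | firstStack => exact mem_of_hBin ‹_› ‹_›
  | vLine | overflow => exact mem_of_vBin ‹_› ‹_›
  | wideGroup j _ _ _ _ _ bin_eq le_group group_le =>
    exact Finset.mem_union_right _ (Finset.mem_union_left _
      (Finset.mem_image.2 ⟨j, Finset.mem_Icc.2 ⟨le_group, group_le⟩, bin_eq.symm⟩))
  | tallGroup j _ _ _ _ _ bin_eq le_group group_le =>
    exact Finset.mem_union_right _ (Finset.mem_union_right _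
      (Finset.mem_image.2 ⟨j, Finset.mem_Icc.2 ⟨le_group, group_le⟩, bin_eq.symm⟩))

section card_bins

variable {h h' : List Placed} {m : ℕ} (hh' : IsPacking h') (hm : ∀ p ∈ h', p.bin < m)
include hh' hm

lemma Invariant.card_openBins_le {σ : State} (H : Invariant h σ) (same_items : items h' = items h)
    (nonempty : h' ≠ []) : (σ.openBins (items h)).card ≤ 2 * m := by
  have m_pos : 0 < m := (hm _ (List.head_mem nonempty)).pos
  have bins_le := hh'.card_wideBins_add_card_tallBins_le hm
  have wide_lt (pos : 0 < σ.wideGroups) : σ.wideGroups < 2 * (wideBins h').card :=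
    H.wide.groups_lt_two_mul pos (same_items ▸ hh'.wideHeight_le_card_wideBins)
  have tall_lt (pos : 0 < σ.tallGroups) : σ.tallGroups < 2 * (tallBins h').card :=
    H.tall.groups_lt_two_mul pos (same_items ▸ hh'.tallWidth_le_card_tallBins)
  have wide_first := H.wide_first
  refine (σ.card_openBins_le _).trans ?_
  split_ifs with need
  · have two_le : 2 ≤ m := hh'.two_le_of_needsHBin_of_needsVBin hm (same_items ▸ need.1)
      (same_items ▸ need.2)
    omega
  · have wide_le : σ.wideGroups < 2 := by
      by_contra! hr
      exact need ⟨H.needsHBin_of_two_le hr, H.needsVBin_of_two_le hr⟩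
    omega

lemma Invariant.card_bins_le {σ : State} (H : Invariant h σ) (same_items : items h' = items h) :
    (h.map Placed.bin).toFinset.card ≤ 2 * m := by
  by_cases nonempty : h' = []
  · have : h = [] := by simpa [items, nonempty] using same_items.symm
    simp [this]
  · refine (Finset.card_le_card fun b hb => ?_).trans
      (H.card_openBins_le hh' hm same_items nonempty)
    obtain ⟨p, hp, rfl⟩ := List.mem_map.1 (List.mem_toFinset.1 hb)
    exact (H.slot p hp).bin_mem_openBins H.bins

lemma Good.card_bins_le (good : Good h) (same_items : items h' = items h) :
    (h.map Placed.bin).toFinset.card ≤ 2 * m := by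
  obtain ⟨σ, H | H⟩ := good
  · exact H.card_bins_le hh' hm same_items
  · have bound := H.card_bins_le hh'.map_swap (List.forall_mem_map.2 hm)
      (by rw [items_map_swap, items_map_swap, same_items])
    rwa [List.map_map] at bound

end card_bins

/-- there is a deterministic online bin-packing algorithm for L-skeletons
that on every input sequence produces a valid packing using at most `2·OPT` bins. -/
theorem stmt14 :
    ∃ A : List LSkel → ℕ × ℝ × ℝ,
      ∀ l : List LSkel, (∀ L ∈ l, L.IsValid) →
        OnlinePacks A l ∧ binsUsed A l ≤ 2 * OPT l := by
  obtain ⟨A, hA⟩ := exists_online_algorithm (Good := Good) ⟨_, .inl invariant_nil⟩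
    fun _ good _ valid => good.exists_append valid
  refine ⟨A, fun l hl => ⟨onlinePacks_of_isPacking hl (hA l hl).isPacking, ?_⟩⟩
  obtain ⟨h, items_eq, packing, bin_lt⟩ := (offPacks_OPT hl).exists_isPacking hl
  rw [binsUsed_eq]
  exact (hA l hl).card_bins_le packing bin_lt (items_eq.trans (items_history A l).symm)
end

section
/- Let Z and Z′ be Z-skeletons with parameters (w, a, b) and (w′, a′, b′) satisfying w > 1/2, w′ > 1/2, a + b = a′ + b′ = 1, a, b, a′, b′ ≥ 0 and b < b′. Suppose Z is translated by (x, b) and Z′ is translated by (x′, b′), where 0 ≤ x ≤ 1 − w and 0 ≤ x′ ≤ 1 − w′ (these are exactly the translations placing each skeleton inside [0,1]²). Then the two translates have a common point if and only if x′ ≤ x or x′ + w′ ≤ x + w. -/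
/-- A Z-skeleton, given by its parameters `(w, a, b)`. -/
structure ZSkel where
  w : ℝ
  a : ℝ
  b : ℝ

/-- The point set `({0}×[0,a]) ∪ ([0,w]×{0}) ∪ ({w}×[−b,0])` of a Z-skeleton. -/
def ZSkel.toSet (Z : ZSkel) : Set (ℝ × ℝ) :=
  Set.Icc ((0, 0) : ℝ × ℝ) (0, Z.a) ∪ Set.Icc ((0, 0) : ℝ × ℝ) (Z.w, 0) ∪
    Set.Icc ((Z.w, -Z.b) : ℝ × ℝ) (Z.w, 0)

/-!
A Z-skeleton `Z` translated by `(x, y)` has a left arm rising from its bar at abscissa `x` and a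
right arm hanging from its bar at abscissa `x + w`. Let `Z'` have its bar at height `y' > y`, within
reach of the left arm of `Z`, and let its right arm reach down to height `y`. A common point above
the bar of `Z` lies on the left arm of `Z`, so `x' ≤ x`; any other common point is below the bar of
`Z'`, hence on the right arm of `Z'`, so `x' + w' ≤ x + w`. Conversely, these inequalities make the
left arm of `Z` cross the bar of `Z'` at `(x, y')`, respectively the right arm of `Z'` cross the bar
of `Z` at `(x' + w', y)`, as long as `x ≤ x' + w'`. Inside the unit square, widths above `1/2`
ensure the latter, since then `x < 1/2 < x' + w'`.
-/

namespace ZSkel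

open Set

theorem planeTranslate_toSet (Z : ZSkel) (x y : ℝ) :
    planeTranslate (x, y) Z.toSet =
      {x} ×ˢ Icc y (y + Z.a) ∪ Icc x (x + Z.w) ×ˢ {y} ∪ {x + Z.w} ×ˢ Icc (y - Z.b) y := by
  simp only [planeTranslate, toSet, image_union, image_add_const_Icc, Prod.mk_add_mk]
  simp only [← Icc_prod_Icc, Icc_self, zero_add, add_comm Z.a, add_comm Z.w, neg_add_eq_sub]

variable {Z Z' : ZSkel} {x y x' y' : ℝ} {p : ℝ × ℝ}

theorem mem_planeTranslate_toSet :
    p ∈ planeTranslate (x, y) Z.toSet ↔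
      (p.1 = x ∧ p.2 ∈ Icc y (y + Z.a)) ∨ (p.1 ∈ Icc x (x + Z.w) ∧ p.2 = y) ∨
        (p.1 = x + Z.w ∧ p.2 ∈ Icc (y - Z.b) y) := by
  simp only [planeTranslate_toSet, mem_union, mem_prod, mem_singleton_iff, or_assoc]

theorem fst_mem_Icc_of_mem_planeTranslate (hw : 0 ≤ Z.w)
    (hp : p ∈ planeTranslate (x, y) Z.toSet) : p.1 ∈ Icc x (x + Z.w) := by
  have hxw : x ≤ x + Z.w := le_add_of_nonneg_right hw
  obtain ⟨hleft, -⟩ | ⟨hbar, -⟩ | ⟨hright, -⟩ := mem_planeTranslate_toSet.1 hp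
  · exact hleft.symm ▸ left_mem_Icc.2 hxw
  · exact hbar
  · exact hright.symm ▸ right_mem_Icc.2 hxw

theorem fst_eq_of_mem_planeTranslate_of_lt_snd (hp : p ∈ planeTranslate (x, y) Z.toSet)
    (hy : y < p.2) : p.1 = x := by
  obtain ⟨hleft, -⟩ | ⟨-, hbar⟩ | ⟨-, hright⟩ := mem_planeTranslate_toSet.1 hp
  · exact hleft
  · exact absurd hbar hy.ne'
  · exact absurd hright.2 hy.not_ge

theorem fst_eq_of_mem_planeTranslate_of_snd_lt (hp : p ∈ planeTranslate (x, y) Z.toSet)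
    (hy : p.2 < y) : p.1 = x + Z.w := by
  obtain ⟨-, hleft⟩ | ⟨-, hbar⟩ | ⟨hright, -⟩ := mem_planeTranslate_toSet.1 hp
  · exact absurd hleft.1 hy.not_ge
  · exact absurd hbar hy.ne
  · exact hright

theorem left_le_or_right_le_of_mem_of_mem (hw : 0 ≤ Z.w) (hw' : 0 ≤ Z'.w) (hy : y < y')
    (hp : p ∈ planeTranslate (x, y) Z.toSet) (hp' : p ∈ planeTranslate (x', y') Z'.toSet) :
    x' ≤ x ∨ x' + Z'.w ≤ x + Z.w := by
  rcases lt_or_ge y p.2 with habove | hbelow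
  · have hleft : p.1 = x := fst_eq_of_mem_planeTranslate_of_lt_snd hp habove
    exact .inl (hleft ▸ (fst_mem_Icc_of_mem_planeTranslate hw' hp').1)
  · have hright : p.1 = x' + Z'.w :=
      fst_eq_of_mem_planeTranslate_of_snd_lt hp' (hbelow.trans_lt hy)
    exact .inr (hright ▸ (fst_mem_Icc_of_mem_planeTranslate hw hp).2)

theorem leftArm_bar_mem_inter (hy : y' ∈ Icc y (y + Z.a)) (hx : x ∈ Icc x' (x' + Z'.w)) :
    (x, y') ∈ planeTranslate (x, y) Z.toSet ∩ planeTranslate (x', y') Z'.toSet :=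
  ⟨mem_planeTranslate_toSet.2 (.inl ⟨rfl, hy⟩),
    mem_planeTranslate_toSet.2 (.inr (.inl ⟨hx, rfl⟩))⟩

theorem bar_rightArm_mem_inter (hx : x' + Z'.w ∈ Icc x (x + Z.w)) (hy : y ∈ Icc (y' - Z'.b) y') :
    (x' + Z'.w, y) ∈ planeTranslate (x, y) Z.toSet ∩ planeTranslate (x', y') Z'.toSet :=
  ⟨mem_planeTranslate_toSet.2 (.inr (.inl ⟨hx, rfl⟩)),
    mem_planeTranslate_toSet.2 (.inr (.inr ⟨rfl, hy⟩))⟩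

end ZSkel

open ZSkel in
theorem stmt19_general {Z Z' : ZSkel} {x y x' y' : ℝ} (hw : 0 ≤ Z.w) (hw' : 0 ≤ Z'.w)
    (hy : y < y') (ha : y' ≤ y + Z.a) (hb' : y' - Z'.b ≤ y) :
    (planeTranslate (x, y) Z.toSet ∩ planeTranslate (x', y') Z'.toSet).Nonempty ↔
      x ≤ x' + Z'.w ∧ (x' ≤ x ∨ x' + Z'.w ≤ x + Z.w) := by
  constructor
  · rintro ⟨p, hp, hp'⟩
    have hxp : x ≤ p.1 := (fst_mem_Icc_of_mem_planeTranslate hw hp).1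
    have hpx' : p.1 ≤ x' + Z'.w := (fst_mem_Icc_of_mem_planeTranslate hw' hp').2
    exact ⟨hxp.trans hpx', left_le_or_right_le_of_mem_of_mem hw hw' hy hp hp'⟩
  · rintro ⟨hx, hleft | hright⟩
    · exact ⟨_, leftArm_bar_mem_inter ⟨hy.le, ha⟩ ⟨hleft, hx⟩⟩
    · exact ⟨_, bar_rightArm_mem_inter ⟨hx, hright⟩ ⟨hb', hy.le⟩⟩

/-- for Z-skeletons `Z = (w, a, b)` and `Z' = (w', a', b')` with
`w, w' > 1/2`, `a + b = a' + b' = 1` and `b < b'`, translated by `(x, b)` and `(x', b')`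
respectively with `0 ≤ x ≤ 1 − w` and `0 ≤ x' ≤ 1 − w'` (exactly the translations placing
them inside `[0,1]²`), the two translates meet if and only if `x' ≤ x` or
`x' + w' ≤ x + w`. -/
theorem stmt19 (w a b w' a' b' x x' : ℝ)
    (hw : 1 / 2 < w) (hw' : 1 / 2 < w')
    (ha : 0 ≤ a) (hb : 0 ≤ b) (ha' : 0 ≤ a') (hb' : 0 ≤ b')
    (hab : a + b = 1) (hab' : a' + b' = 1) (hbb' : b < b')
    (hx0 : 0 ≤ x) (hx1 : x ≤ 1 - w) (hx0' : 0 ≤ x') (hx1' : x' ≤ 1 - w') :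
    (planeTranslate (x, b) (ZSkel.toSet ⟨w, a, b⟩) ∩
      planeTranslate (x', b') (ZSkel.toSet ⟨w', a', b'⟩)).Nonempty ↔
    x' ≤ x ∨ x' + w' ≤ x + w := by
  have hx : x ≤ x' + w' := by linarith
  rw [stmt19_general, and_iff_right hx] <;> linarith
end
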